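/- For every n ≥ 2 and m ≥ 0, the dimensions over k satisfy dim_k R^{Λ₁}_{B_n}(m) = dim_k R^{Λ₁}_{D_{n+1}}(m) = dim_k R^{Λ₂}_{D_{n+1}}(m) = Σ_λ |ST(λ)|², where the sum runs over all strict partitions λ of m with all parts at most n and ST(λ) denotes the set of standard tableaux of shifted shape λ. -/

import Mathlib

open scoped Classical

namespace QHA

variable (k : Type) [Field k]

/-- Generators of the quiver Hecke algebra `R(β)` on `m` strands with vertex set
`Fin n`: the idempotents `e(ν)`, the polynomial generators `x_p` and the
intertwiners `τ_j` (acting on strands `j`, `j+1`, 0-based). -/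
inductive Gen (n m : ℕ) : Type
  | e (ν : Fin m → Fin n) : Gen n m
  | x (p : Fin m) : Gen n m
  | t (j : ℕ) (h : j + 1 < m) : Gen n m

/-- The free algebra on the generators. -/
abbrev FA (n m : ℕ) := FreeAlgebra k (Gen n m)

variable {n m : ℕ}

noncomputable def Eg (ν : Fin m → Fin n) : FA k n m := FreeAlgebra.ι k (Gen.e ν)
noncomputable def Xg (p : Fin m) : FA k n m := FreeAlgebra.ι k (Gen.x p)
noncomputable def Tg (j : ℕ) (h : j + 1 < m) : FA k n m := FreeAlgebra.ι k (Gen.t j h)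

/-- The transposition of the strands `j`, `j+1` (0-based). -/
def posSwap (j : ℕ) (h : j + 1 < m) : Equiv.Perm (Fin m) :=
  Equiv.swap ⟨j, Nat.lt_of_succ_lt h⟩ ⟨j + 1, h⟩

/-- The place-permutation `s_j ν` of a sequence `ν`. -/
def swapSeq (j : ℕ) (h : j + 1 < m) (ν : Fin m → Fin n) : Fin m → Fin n :=
  ν ∘ posSwap j h

/-- Evaluation of a two-variable polynomial `p(u,v)` at two elements of a
(possibly noncommutative) `k`-algebra, as `Σ t_{p,q} a^p b^q`. -/
noncomputable def eval2 {A : Type} [Ring A] [Algebra k A]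
    (p : MvPolynomial (Fin 2) k) (a b : A) : A :=
  ∑ d ∈ p.support, algebraMap k A (MvPolynomial.coeff d p) * (a ^ d 0 * b ^ d 1)

/-- Evaluation of a three-variable polynomial. -/
noncomputable def eval3 {A : Type} [Ring A] [Algebra k A]
    (p : MvPolynomial (Fin 3) k) (a b c : A) : A :=
  ∑ d ∈ p.support, algebraMap k A (MvPolynomial.coeff d p) * (a ^ d 0 * b ^ d 1 * c ^ d 2)

/-- For `p = Q(u,v)`, the polynomial `(Q(u,v) - Q(w,v))/(u - w)` in the three
variables `u = X 0`, `v = X 1`, `w = X 2` (exact division by the monic `u - w`). -/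
noncomputable def Qbar (p : MvPolynomial (Fin 2) k) : MvPolynomial (Fin 3) k :=
  (MvPolynomial.finSuccEquiv k 2).symm
    (Polynomial.divByMonic
      ((MvPolynomial.finSuccEquiv k 2)
        (MvPolynomial.rename (fun i : Fin 2 => if i = 0 then (0 : Fin 3) else 1) p -
          MvPolynomial.rename (fun i : Fin 2 => if i = 0 then (2 : Fin 3) else 1) p))
      (Polynomial.X - Polynomial.C (MvPolynomial.X 1)))

/-- Admissibility of the family `Q_{i,j}(u,v)` of polynomials with respect to the
(symmetrizable) Cartan matrix `A` and symmetrizing integers `d`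
(so `(α_i, α_j) = d_i A_{i j}`):
`Q_{i,i} = 0`; `Q_{j,i}(u,v) = Q_{i,j}(v,u)`; `Q_{i,j} = 1` whenever `(α_i,α_j) = 0`
(`i ≠ j`); `Q_{i,j}` is supported on `(p,q)` with
`(α_i,α_i) p + (α_j,α_j) q = -2(α_i,α_j)`; and `t_{i,j;-a_{ij},0} ≠ 0`. -/
def QAdmissible (A : Fin n → Fin n → ℤ) (d : Fin n → ℤ)
    (Q : Fin n → Fin n → MvPolynomial (Fin 2) k) : Prop :=
  (∀ i, Q i i = 0) ∧
  (∀ i j, Q j i = MvPolynomial.rename (Equiv.swap (0 : Fin 2) 1) (Q i j)) ∧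
  (∀ i j, i ≠ j → d i * A i j = 0 → Q i j = 1) ∧
  (∀ i j, i ≠ j → ∀ dd ∈ (Q i j).support,
    (2 * d i) * (dd 0 : ℤ) + (2 * d j) * (dd 1 : ℤ) = -2 * (d i * A i j)) ∧
  (∀ i j, i ≠ j →
    MvPolynomial.coeff (Finsupp.single (0 : Fin 2) (-(A i j)).toNat) (Q i j) ≠ 0)

/-- The defining relations of the quiver Hecke algebra `R(β)`, where
`S ⊆ I^m` is the set of admissible sequences (`I^β`; `e(ν) = 0` for `ν ∉ S`). -/
inductive Rel (Q : Fin n → Fin n → MvPolynomial (Fin 2) k) (S : Set (Fin m → Fin n)) :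
    FA k n m → FA k n m → Prop
  | e_orth (ν ν' : Fin m → Fin n) (hne : ν ≠ ν') : Rel Q S (Eg k ν * Eg k ν') 0
  | e_idem (ν : Fin m → Fin n) : Rel Q S (Eg k ν * Eg k ν) (Eg k ν)
  | e_sum : Rel Q S (∑ ν : Fin m → Fin n, Eg k ν) 1
  | e_out (ν : Fin m → Fin n) (hν : ν ∉ S) : Rel Q S (Eg k ν) 0
  | xx (p q : Fin m) : Rel Q S (Xg k p * Xg k q) (Xg k q * Xg k p)
  | xe (p : Fin m) (ν : Fin m → Fin n) : Rel Q S (Xg k p * Eg k ν) (Eg k ν * Xg k p)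
  | te (j : ℕ) (h : j + 1 < m) (ν : Fin m → Fin n) :
      Rel Q S (Tg k j h * Eg k ν) (Eg k (swapSeq j h ν) * Tg k j h)
  | tt (a : ℕ) (ha : a + 1 < m) (b : ℕ) (hb : b + 1 < m) (hab : a + 1 < b ∨ b + 1 < a) :
      Rel Q S (Tg k a ha * Tg k b hb) (Tg k b hb * Tg k a ha)
  | tsq (j : ℕ) (h : j + 1 < m) (ν : Fin m → Fin n) :
      Rel Q S (Tg k j h * Tg k j h * Eg k ν)
        (eval2 k (Q (ν ⟨j, Nat.lt_of_succ_lt h⟩) (ν ⟨j + 1, h⟩))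
          (Xg k ⟨j, Nat.lt_of_succ_lt h⟩) (Xg k ⟨j + 1, h⟩) * Eg k ν)
  | tx_left (j : ℕ) (h : j + 1 < m) (ν : Fin m → Fin n)
      (hv : ν ⟨j, Nat.lt_of_succ_lt h⟩ = ν ⟨j + 1, h⟩) :
      Rel Q S (Tg k j h * Xg k ⟨j, Nat.lt_of_succ_lt h⟩ * Eg k ν)
        (Xg k ⟨j + 1, h⟩ * Tg k j h * Eg k ν - Eg k ν)
  | tx_right (j : ℕ) (h : j + 1 < m) (ν : Fin m → Fin n)
      (hv : ν ⟨j, Nat.lt_of_succ_lt h⟩ = ν ⟨j + 1, h⟩) :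
      Rel Q S (Tg k j h * Xg k ⟨j + 1, h⟩ * Eg k ν)
        (Xg k ⟨j, Nat.lt_of_succ_lt h⟩ * Tg k j h * Eg k ν + Eg k ν)
  | tx_comm (j : ℕ) (h : j + 1 < m) (ν : Fin m → Fin n) (p : Fin m)
      (hcase : ν ⟨j, Nat.lt_of_succ_lt h⟩ ≠ ν ⟨j + 1, h⟩ ∨ ((p : ℕ) ≠ j ∧ (p : ℕ) ≠ j + 1)) :
      Rel Q S (Tg k j h * Xg k p * Eg k ν) (Xg k (posSwap j h p) * Tg k j h * Eg k ν)
  | braid_ne (j : ℕ) (h1 : j + 1 < m) (h2 : j + 2 < m) (ν : Fin m → Fin n)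
      (hv : ν ⟨j, by omega⟩ ≠ ν ⟨j + 2, h2⟩) :
      Rel Q S
        (Tg k (j + 1) (by omega) * Tg k j h1 * Tg k (j + 1) (by omega) * Eg k ν)
        (Tg k j h1 * Tg k (j + 1) (by omega) * Tg k j h1 * Eg k ν)
  | braid_eq (j : ℕ) (h1 : j + 1 < m) (h2 : j + 2 < m) (ν : Fin m → Fin n)
      (hv : ν ⟨j, by omega⟩ = ν ⟨j + 2, h2⟩) :
      Rel Q S
        (Tg k (j + 1) (by omega) * Tg k j h1 * Tg k (j + 1) (by omega) * Eg k ν)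
        (Tg k j h1 * Tg k (j + 1) (by omega) * Tg k j h1 * Eg k ν +
          eval3 k (Qbar k (Q (ν ⟨j, by omega⟩) (ν ⟨j + 1, h1⟩)))
            (Xg k ⟨j, by omega⟩) (Xg k ⟨j + 1, h1⟩) (Xg k ⟨j + 2, h2⟩) * Eg k ν)

/-- The extra cyclotomic relations `x_m^{⟨h_{ν_m}, Λ⟩} e(ν) = 0` (`ν ∈ I^β`),
where `Λ` is written in fundamental-weight coordinates, so `⟨h_i, Λ⟩ = Λ i`. -/
inductive CycRel (Λ : Fin n → ℤ) (S : Set (Fin m → Fin n)) :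
    FA k n m → FA k n m → Prop
  | cyc (ν : Fin m → Fin n) (hν : ν ∈ S) (p : Fin m) (hp : (p : ℕ) + 1 = m) :
      CycRel Λ S (Xg k p ^ (Λ (ν p)).toNat * Eg k ν) 0

/-- Relations of the cyclotomic quiver Hecke algebra `R^Λ(β)`. -/
def CRel (Q : Fin n → Fin n → MvPolynomial (Fin 2) k) (S : Set (Fin m → Fin n))
    (Λ : Fin n → ℤ) : FA k n m → FA k n m → Prop :=
  fun a b => Rel k Q S a b ∨ CycRel k Λ S a b

/-- The `j`-th column of the Cartan matrix: the simple root `α_j` written in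
fundamental-weight coordinates (`⟨h_i, α_j⟩ = A i j`). -/
def αcol (A : Fin n → Fin n → ℤ) (j : Fin n) : Fin n → ℤ := fun i => A i j

/-- `FPath A Λ [i₁, …, i_ℓ] ξ` means `f̃_{i₁} ⋯ f̃_{i_ℓ} Λ = ξ` in the
minuscule crystal realized on the Weyl orbit of `Λ`:
`f̃_j μ = μ - α_j` whenever `⟨h_j, μ⟩ = 1` (and is undefined otherwise). -/
inductive FPath (A : Fin n → Fin n → ℤ) (Λ : Fin n → ℤ) :
    List (Fin n) → (Fin n → ℤ) → Prop
  | nil : FPath A Λ [] Λ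
  | cons (j : Fin n) (l : List (Fin n)) (ξ : Fin n → ℤ) :
      FPath A Λ l ξ → ξ j = 1 → FPath A Λ (j :: l) (ξ - αcol A j)

/-- The simple reflection `s_j μ = μ - ⟨h_j, μ⟩ α_j` on the weight lattice. -/
def sRef (A : Fin n → Fin n → ℤ) (j : Fin n) (μ : Fin n → ℤ) : Fin n → ℤ :=
  fun i => μ i - μ j * A i j

/-- The Weyl group orbit of `Λ` (the Weyl group being generated by the
involutions `s_j`, its orbit consists of images under words in the `s_j`). -/
def orbitW (A : Fin n → Fin n → ℤ) (Λ : Fin n → ℤ) : Set (Fin n → ℤ) :=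
  {ξ | ∃ l : List (Fin n), l.foldr (sRef A) Λ = ξ}

end QHA

namespace QHA

/-- The Cartan matrix of type `Bₙ` (0-based labeling; the first node carries the
short simple root). -/
def AB (n : ℕ) : Fin n → Fin n → ℤ := fun i j =>
  if i = j then 2
  else if (i : ℕ) = 0 ∧ (j : ℕ) = 1 then -2
  else if (i : ℕ) + 1 = (j : ℕ) ∨ (j : ℕ) + 1 = (i : ℕ) then -1
  else 0

/-- The symmetrizing integers of type `Bₙ`. -/
def dB (n : ℕ) : Fin n → ℤ := fun i => if (i : ℕ) = 0 then 1 else 2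

/-- The Cartan matrix of type `D_n` (0-based labeling: the nodes `0` and `1` are
the two end nodes, both joined to the node `2`, and `2 — 3 — ⋯ — (n-1)` is a chain). -/
def AD (n : ℕ) : Fin n → Fin n → ℤ := fun i j =>
  if i = j then 2
  else if ((i : ℕ) = 0 ∧ (j : ℕ) = 2) ∨ ((i : ℕ) = 2 ∧ (j : ℕ) = 0) then -1
  else if ((i : ℕ) = 1 ∧ (j : ℕ) = 2) ∨ ((i : ℕ) = 2 ∧ (j : ℕ) = 1) then -1
  else if (2 ≤ (i : ℕ) ∧ 2 ≤ (j : ℕ)) ∧ ((i : ℕ) + 1 = (j : ℕ) ∨ (j : ℕ) + 1 = (i : ℕ))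
    then -1
  else 0

/-- The shifted Young diagram of a strict partition `l = (λ₁ > λ₂ > ⋯)`. -/
def diagram (l : List ℕ) : Set (ℕ × ℕ) :=
  {b | b.1 - 1 < l.length ∧ 1 ≤ b.1 ∧ b.1 ≤ b.2 ∧ b.2 + 1 ≤ l.getD (b.1 - 1) 0 + b.1}

/-- `f : Fin N → ℕ × ℕ` is a standard tableau of shifted shape `l`. -/
def IsSYT (l : List ℕ) (N : ℕ) (f : Fin N → ℕ × ℕ) : Prop :=
  Function.Injective f ∧ Set.range f = diagram l ∧
    (∀ a b : Fin N, (f a).1 = (f b).1 → (f a).2 < (f b).2 → a < b) ∧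
    (∀ a b : Fin N, (f a).2 = (f b).2 → (f a).1 < (f b).1 → a < b)

/-- Pairs `(T, S)` of standard tableaux of a common shifted shape `λ ⊢ m` with all
parts at most `n`; the number of such pairs is `Σ_{λ ⊢ m, λ₁ ≤ n} |ST(λ)|²`. -/
def TabPairs (n m : ℕ) : Type :=
  {p : (Fin m → ℕ × ℕ) × (Fin m → ℕ × ℕ) //
    ∃ l : List ℕ, l.Chain' (· > ·) ∧ (∀ x ∈ l, 0 < x ∧ x ≤ n) ∧ l.sum = m ∧
      IsSYT l m p.1 ∧ IsSYT l m p.2}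

/-!
For a minuscule weight `Λ` all weights along a crystal path have coordinates in `{-1, 0, 1}`. Hence,
by induction on the length of a word, every dot acts by zero on `R^Λ`, the idempotents `e(ν)` vanish
unless `ν` is a crystal path, and an intertwiner `τ_j` kills `e(ν)` unless the letters `ν_j` and
`ν_{j+1}` are orthogonal. What survives is generated by exchanges of orthogonal letters, which are
mutually inverse and satisfy the braid relations without error terms; any two paths of the same
weight are connected by such exchanges. So `R^Λ(m)` is spanned by one element for every pair of
paths of equal content, and these are linearly independent because they act as distinct matrix units
on the space with basis the set of paths. Therefore `dim R^Λ(m)` is the number of pairs of paths of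
length `m` which are rearrangements of each other.

For `B_n` the weight of a path is determined by how often each letter occurs, and reading the paths
as residue sequences `j - i` of boxes `(i, j)` identifies them with the standard tableaux of shifted
shape, the content of the path being the shape of the tableau. Folding the two end nodes of
`D_{n+1}` maps the paths of either half-spin weight bijectively onto those of `B_n`, and preserves
and reflects equality of contents.
-/

/-! ### Paths in a minuscule crystal -/

section Paths

variable {N m : ℕ} {A : Fin N → Fin N → ℤ} {Λ : Fin N → ℤ}

/-- The weight `Λ - ∑ α_i`, the sum being over the letters of `w`. -/
def pathWeight (A : Fin N → Fin N → ℤ) (Λ : Fin N → ℤ) (w : List (Fin N)) : Fin N → ℤ :=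
  Λ - (w.map (αcol A)).sum

/-- The word `i₁ ⋯ i_ℓ` is a path from `Λ` in the minuscule crystal: `f̃_{i₁} ⋯ f̃_{i_ℓ} Λ ≠ 0`. -/
def IsPath (A : Fin N → Fin N → ℤ) (Λ : Fin N → ℤ) (w : List (Fin N)) : Prop :=
  FPath A Λ w (pathWeight A Λ w)

lemma pathWeight_nil (i : Fin N) : pathWeight A Λ [] i = Λ i := by simp [pathWeight]

lemma pathWeight_cons (j : Fin N) (w : List (Fin N)) :
    pathWeight A Λ (j :: w) = pathWeight A Λ w - αcol A j := by
  simp only [pathWeight, List.map_cons, List.sum_cons]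
  abel

lemma pathWeight_cons_apply (j : Fin N) (w : List (Fin N)) (i : Fin N) :
    pathWeight A Λ (j :: w) i = pathWeight A Λ w i - A i j :=
  congrFun (pathWeight_cons j w) i

lemma pathWeight_perm {u v : List (Fin N)} (h : u.Perm v) :
    pathWeight A Λ u = pathWeight A Λ v := by
  rw [pathWeight, pathWeight, (h.map _).sum_eq]

lemma pathWeight_append_of_orthogonal {i : Fin N} {v : List (Fin N)} (hv : ∀ c ∈ v, A i c = 0)
    (r : List (Fin N)) : pathWeight A Λ (v ++ r) i = pathWeight A Λ r i := by
  induction v with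
  | nil => rfl
  | cons c v ih =>
    rw [List.cons_append, pathWeight_cons_apply, hv c List.mem_cons_self, sub_zero,
      ih fun d hd => hv d (List.mem_cons_of_mem _ hd)]

lemma isPath_nil : IsPath A Λ [] := by
  simpa [IsPath, pathWeight] using FPath.nil (A := A) (Λ := Λ)

lemma FPath.eq_pathWeight {w : List (Fin N)} {ξ : Fin N → ℤ} (h : FPath A Λ w ξ) :
    ξ = pathWeight A Λ w := by
  induction h with
  | nil => simp [pathWeight]
  | cons j w ξ _ _ ih => rw [pathWeight_cons, ih]

lemma isPath_cons {j : Fin N} {w : List (Fin N)} :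
    IsPath A Λ (j :: w) ↔ IsPath A Λ w ∧ pathWeight A Λ w j = 1 := by
  constructor
  · intro h
    rw [IsPath] at h
    generalize pathWeight A Λ (j :: w) = ξ at h
    obtain _ | ⟨_, _, ξ, hw, hj⟩ := h
    obtain rfl := hw.eq_pathWeight
    exact ⟨hw, hj⟩
  · rintro ⟨hw, hj⟩
    rw [IsPath, pathWeight_cons]
    exact FPath.cons j w _ hw hj

lemma IsPath.of_append {u w : List (Fin N)} (h : IsPath A Λ (u ++ w)) : IsPath A Λ w := by
  induction u with
  | nil => exact h
  | cons c u ih => exact ih (isPath_cons.1 h).1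

lemma exists_append_of_orthogonal (A : Fin N → Fin N → ℤ) (i : Fin N) (w : List (Fin N)) :
    ∃ v r, w = v ++ r ∧ (∀ c ∈ v, A i c = 0) ∧ ∀ j ∈ r.head?, A i j ≠ 0 := by
  refine ⟨w.takeWhile (A i · = 0), w.dropWhile (A i · = 0), List.takeWhile_append_dropWhile.symm,
    fun c hc => by simpa using List.mem_takeWhile_imp hc, fun j hj => ?_⟩
  simpa [Option.mem_def.1 hj] using List.head?_dropWhile_not (A i · = 0) w

/-- `A` is a generalized Cartan matrix and `Λ` a dominant weight whose crystal paths only meet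
weights with coordinates in `{-1, 0, 1}`. -/
structure IsMinuscule (A : Fin N → Fin N → ℤ) (Λ : Fin N → ℤ) : Prop where
  diag : ∀ i, A i i = 2
  nonpos : ∀ i j, i ≠ j → A i j ≤ 0
  zero_symm : ∀ i j, A i j = 0 → A j i = 0
  dominant : ∀ i, 0 ≤ Λ i
  weight_mem : ∀ w, IsPath A Λ w → ∀ i, pathWeight A Λ w i ∈ Set.Icc (-1) 1

namespace IsMinuscule

variable (h : IsMinuscule A Λ)
include h

lemma ne_of_zero {i j : Fin N} (hij : A i j = 0) : i ≠ j := by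
  rintro rfl
  simp [h.diag] at hij

lemma neg_of_adjacent {i j : Fin N} (hij : i ≠ j) (hA : A i j ≠ 0) : A i j < 0 :=
  (h.nonpos i j hij).lt_of_ne hA

lemma not_isPath_cons_cons_self (i : Fin N) (w : List (Fin N)) : ¬IsPath A Λ (i :: i :: w) := by
  intro hw
  obtain ⟨⟨-, hi⟩, hi'⟩ := (isPath_cons.1 hw).imp_left isPath_cons.1
  rw [pathWeight_cons_apply, hi, h.diag] at hi'
  omega

lemma weight_ne_one_of_adjacent {i j : Fin N} {w : List (Fin N)} (hij : i ≠ j) (hA : A i j ≠ 0)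
    (hw : IsPath A Λ (j :: w)) : pathWeight A Λ w i ≠ 1 := by
  intro hi
  have hle := (h.weight_mem _ hw i).2
  rw [pathWeight_cons_apply, hi] at hle
  have := h.neg_of_adjacent hij hA
  omega

lemma exists_append_cons_of_weight_neg {i : Fin N} {w : List (Fin N)} (hw : IsPath A Λ w)
    (hi : pathWeight A Λ w i = -1) : ∃ v r, w = v ++ i :: r ∧ ∀ c ∈ v, A i c = 0 := by
  obtain ⟨v, r, rfl, hv, hr⟩ := exists_append_of_orthogonal A i w
  rw [pathWeight_append_of_orthogonal hv] at hi
  cases r with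
  | nil =>
    have := h.dominant i
    rw [pathWeight_nil] at hi
    omega
  | cons j r =>
    obtain rfl | hij := eq_or_ne i j
    · exact ⟨v, r, rfl, hv⟩
    · have hneg := h.neg_of_adjacent hij (hr j rfl)
      have hge := (h.weight_mem r (isPath_cons.1 hw.of_append).1 i).1
      rw [pathWeight_cons_apply] at hi
      omega

lemma isPath_swap {u : List (Fin N)} {i j : Fin N} {w : List (Fin N)} (hij : A i j = 0)
    (hp : IsPath A Λ (u ++ i :: j :: w)) : IsPath A Λ (u ++ j :: i :: w) := by
  induction u with
  | nil =>
    simp only [List.nil_append, isPath_cons, pathWeight_cons_apply, hij, h.zero_symm i j hij,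
      sub_zero] at hp ⊢
    exact ⟨⟨hp.1.1, hp.2⟩, hp.1.2⟩
  | cons c u ih =>
    rw [List.cons_append, isPath_cons] at hp ⊢
    exact ⟨ih hp.1, pathWeight_perm ((List.Perm.swap j i w).append_left u) ▸ hp.2⟩

end IsMinuscule

/-- Exchange of two adjacent orthogonal letters. -/
inductive OrthogonalSwap (A : Fin N → Fin N → ℤ) : List (Fin N) → List (Fin N) → Prop
  | swap (u : List (Fin N)) (i j : Fin N) (w : List (Fin N)) (hij : A i j = 0) :
      OrthogonalSwap A (u ++ i :: j :: w) (u ++ j :: i :: w)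

open Relation in
lemma reflTransGen_orthogonalSwap_cons (c : Fin N) {v w : List (Fin N)}
    (h : ReflTransGen (OrthogonalSwap A) v w) :
    ReflTransGen (OrthogonalSwap A) (c :: v) (c :: w) := by
  refine h.lift (c :: ·) ?_
  rintro _ _ ⟨u, i, j, w, hij⟩
  exact .swap (c :: u) i j w hij

open Relation in
lemma reflTransGen_orthogonalSwap_front {i : Fin N} {v : List (Fin N)} (hv : ∀ c ∈ v, A c i = 0)
    (r : List (Fin N)) : ReflTransGen (OrthogonalSwap A) (v ++ i :: r) (i :: (v ++ r)) := by
  induction v with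
  | nil => exact .refl
  | cons c v ih =>
    exact (reflTransGen_orthogonalSwap_cons c
      (ih fun d hd => hv d (List.mem_cons_of_mem _ hd))).tail
      (.swap [] c i (v ++ r) (hv c List.mem_cons_self))

namespace IsMinuscule

variable (h : IsMinuscule A Λ)
include h

lemma isPath_of_reflTransGen {v w : List (Fin N)}
    (hvw : Relation.ReflTransGen (OrthogonalSwap A) v w) (hv : IsPath A Λ v) : IsPath A Λ w := by
  induction hvw with
  | refl => exact hv
  | tail _ hs ih =>
    obtain ⟨u, i, j, w, hij⟩ := hs
    exact h.isPath_swap hij ih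

/-- The first letter `i` of the target has weight `-1` at the source, so it can be brought to the
front there. -/
lemma reflTransGen_of_perm {μ ν : List (Fin N)} (hμ : IsPath A Λ μ) (hν : IsPath A Λ ν)
    (hp : ν.Perm μ) : Relation.ReflTransGen (OrthogonalSwap A) ν μ := by
  induction μ generalizing ν with
  | nil => rw [hp.eq_nil]
  | cons i μ ih =>
    have hi : pathWeight A Λ ν i = -1 := by
      rw [pathWeight_perm hp, pathWeight_cons_apply, (isPath_cons.1 hμ).2, h.diag]
      rfl
    obtain ⟨v, r, rfl, hv⟩ := h.exists_append_cons_of_weight_neg hν hi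
    have hfront := reflTransGen_orthogonalSwap_front (A := A)
      (fun c hc => h.zero_symm _ _ (hv c hc)) r
    have hvr := (isPath_cons.1 (h.isPath_of_reflTransGen hfront hν)).1
    exact hfront.trans <| reflTransGen_orthogonalSwap_cons i <|
      ih (isPath_cons.1 hμ).1 hvr ((List.perm_cons i).1 (List.perm_middle.symm.trans hp))

end IsMinuscule

end Paths

/-- Pairs of rearrangements of each other of length `m`, both satisfying `P`. -/
abbrev PermPairs {α : Type*} (P : List α → Prop) (m : ℕ) : Type _ :=
  {p : List α × List α // (P p.1 ∧ p.1.length = m) ∧ (P p.2 ∧ p.2.length = m) ∧ p.1.Perm p.2}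

/-! ### Evaluation of the polynomials `Q i j` -/

section Polynomials

open MvPolynomial

variable {k : Type} [Field k] {R : Type} [Ring R] [Algebra k R]

lemma map_eval2 {S : Type} [Ring S] [Algebra k S] (f : R →ₐ[k] S) (p : MvPolynomial (Fin 2) k)
    (x y : R) : f (eval2 k p x y) = eval2 k p (f x) (f y) := by
  simp [eval2]

lemma map_eval3 {S : Type} [Ring S] [Algebra k S] (f : R →ₐ[k] S) (p : MvPolynomial (Fin 3) k)
    (x y z : R) : f (eval3 k p x y z) = eval3 k p (f x) (f y) (f z) := by
  simp [eval3]

lemma eval2_zero (x y : R) : eval2 k 0 x y = 0 := by simp [eval2]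

lemma eval2_one (x y : R) : eval2 k 1 x y = 1 := by simp [eval2, support_one]

lemma pow_mul_eq_zero_of_mul_eq_zero {x e : R} (h : x * e = 0) {b : ℕ} (hb : b ≠ 0) :
    x ^ b * e = 0 := by
  obtain ⟨b, rfl⟩ := Nat.exists_eq_succ_of_ne_zero hb
  rw [pow_succ, mul_assoc, h, mul_zero]

lemma eval2_mul_of_mul_eq_zero {p : MvPolynomial (Fin 2) k} {a : ℕ}
    (hp : ∀ b, coeff (Finsupp.single 0 b) p ≠ 0 → b = a) (x : R) {y e : R} (hy : y * e = 0) :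
    eval2 k p x y * e = coeff (Finsupp.single 0 a) p • (x ^ a * e) := by
  rw [eval2, Finset.sum_mul, Finset.sum_eq_single (Finsupp.single 0 a)]
  · simp [Algebra.smul_def, mul_assoc]
  · intro d hd hne
    have hd1 : d 1 ≠ 0 := by
      intro h1
      have hd0 : d = Finsupp.single 0 (d 0) := by
        ext i
        fin_cases i <;> simp [h1]
      rw [hd0] at hd hne
      exact hne (by rw [hp _ (mem_support_iff.1 hd)])
    rw [mul_assoc, mul_assoc, pow_mul_eq_zero_of_mul_eq_zero hy hd1, mul_zero, mul_zero]
  · intro ha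
    simp [notMem_support_iff.1 ha]

lemma eval3_mul_of_mul_eq_zero {p : MvPolynomial (Fin 3) k} {a : ℕ}
    (hp : ∀ b, coeff (Finsupp.single 0 b) p ≠ 0 → b = a) (x : R) {y z e : R} (hy : y * e = 0)
    (hz : z * e = 0) :
    eval3 k p x y z * e = coeff (Finsupp.single 0 a) p • (x ^ a * e) := by
  rw [eval3, Finset.sum_mul, Finset.sum_eq_single (Finsupp.single 0 a)]
  · simp [Algebra.smul_def, mul_assoc]
  · intro d hd hne
    by_cases h2 : d 2 = 0
    · have hd1 : d 1 ≠ 0 := by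
        intro h1
        have hd0 : d = Finsupp.single 0 (d 0) := by
          ext i
          fin_cases i <;> simp [h1, h2]
        rw [hd0] at hd hne
        exact hne (by rw [hp _ (mem_support_iff.1 hd)])
      rw [h2, pow_zero, mul_one, mul_assoc, mul_assoc, pow_mul_eq_zero_of_mul_eq_zero hy hd1,
        mul_zero, mul_zero]
    · rw [mul_assoc, mul_assoc, pow_mul_eq_zero_of_mul_eq_zero hz h2, mul_zero, mul_zero]
  · intro ha
    simp [notMem_support_iff.1 ha]

lemma X_sub_X_mul_Qbar (p : MvPolynomial (Fin 2) k) :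
    (X 0 - X 2) * Qbar k p =
      rename (fun i : Fin 2 => if i = 0 then (0 : Fin 3) else 1) p -
        rename (fun i : Fin 2 => if i = 0 then (2 : Fin 3) else 1) p := by
  have hroot : ((finSuccEquiv k 2)
      (rename (fun i : Fin 2 => if i = 0 then (0 : Fin 3) else 1) p -
        rename (fun i : Fin 2 => if i = 0 then (2 : Fin 3) else 1) p)).IsRoot (X 1) := by
    have h1 : finSuccEquiv k 2 (X 1) = Polynomial.C (X 0) := finSuccEquiv_X_succ (j := 0)
    have h2 : finSuccEquiv k 2 (X 2) = Polynomial.C (X 1) := finSuccEquiv_X_succ (j := 1)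
    rw [Polynomial.IsRoot, map_sub, Polynomial.eval_sub, sub_eq_zero]
    induction p using MvPolynomial.induction_on with
    | C a => simp
    | add p q hp hq => simp only [map_add, Polynomial.eval_add, hp, hq]
    | mul_X p i hp =>
      simp only [map_mul, Polynomial.eval_mul, hp, rename_X]
      congr 1
      fin_cases i <;> simp [h1, h2, finSuccEquiv_X_zero]
  apply (finSuccEquiv k 2).injective
  rw [Qbar, map_mul, AlgEquiv.apply_symm_apply, map_sub (finSuccEquiv k 2) (X 0),
    finSuccEquiv_X_zero, show (2 : Fin 3) = Fin.succ 1 from rfl, finSuccEquiv_X_succ]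
  exact Polynomial.mul_divByMonic_eq_iff_isRoot.2 hroot

lemma coeff_single_Qbar (p : MvPolynomial (Fin 2) k) (b : ℕ) :
    coeff (Finsupp.single 0 b) (Qbar k p) = coeff (Finsupp.single 0 (b + 1)) p := by
  have h := congrArg (coeff (Finsupp.single 0 (b + 1))) (X_sub_X_mul_Qbar p)
  have hf : Function.Injective fun i : Fin 2 => if i = 0 then (0 : Fin 3) else 1 := by decide
  have hrename := coeff_rename_mapDomain _ hf p (Finsupp.single 0 (b + 1))
  rw [Finsupp.mapDomain_single, if_pos rfl] at hrename
  have hzero : coeff (Finsupp.single 0 (b + 1))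
      (rename (fun i : Fin 2 => if i = 0 then (2 : Fin 3) else 1) p) = 0 := by
    refine coeff_rename_eq_zero _ _ _ fun u hu => absurd (DFunLike.congr_fun hu 0) ?_
    rw [Finsupp.mapDomain_of_notMem_range _ _ (by simp)]
    simp
  rw [coeff_sub, hzero, hrename, sub_zero, sub_mul, coeff_sub, coeff_X_mul', coeff_X_mul'] at h
  simpa [← Finsupp.single_tsub] using h

variable {N : ℕ} {A : Fin N → Fin N → ℤ} {d : Fin N → ℤ}
  {Q : Fin N → Fin N → MvPolynomial (Fin 2) k}

namespace QAdmissible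

lemma self_eq_zero (hQ : QAdmissible k A d Q) (i : Fin N) : Q i i = 0 := hQ.1 i

lemma eq_one (hQ : QAdmissible k A d Q) {i j : Fin N} (hij : i ≠ j) (hA : A i j = 0) :
    Q i j = 1 :=
  hQ.2.2.1 i j hij (by rw [hA, mul_zero])

lemma eq_of_coeff_ne_zero (hQ : QAdmissible k A d Q) {i j : Fin N} (hd : d i ≠ 0) (hij : i ≠ j)
    {b : ℕ} (hb : coeff (Finsupp.single 0 b) (Q i j) ≠ 0) : b = (-A i j).toNat := by
  have h := hQ.2.2.2.1 i j hij _ (mem_support_iff.2 hb)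
  rw [Finsupp.single_eq_same, Finsupp.single_eq_of_ne (by decide)] at h
  have : (b : ℤ) = -A i j := mul_left_cancel₀ (mul_ne_zero two_ne_zero hd) (by linear_combination h)
  omega

lemma coeff_ne_zero (hQ : QAdmissible k A d Q) {i j : Fin N} (hij : i ≠ j) :
    coeff (Finsupp.single 0 (-A i j).toNat) (Q i j) ≠ 0 :=
  hQ.2.2.2.2 i j hij

end QAdmissible

end Polynomials

/-! ### Words in the cyclotomic quiver Hecke algebra -/

section Sequences

variable {N m : ℕ}

/-- A word of length `m`, as a sequence indexed by `Fin m`. -/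
def seqOf (L : List (Fin N)) (h : L.length = m) : Fin m → Fin N := fun p => L[p]

lemma seqOf_ofFn (ν : Fin m → Fin N) : seqOf (List.ofFn ν) List.length_ofFn = ν := by
  funext p
  simp [seqOf]

lemma ofFn_seqOf (L : List (Fin N)) (h : L.length = m) : List.ofFn (seqOf L h) = L := by
  subst h
  exact List.ofFn_getElem

lemma seqOf_append_cons (u : List (Fin N)) (i : Fin N) (w : List (Fin N))
    (h : (u ++ i :: w).length = m) (p : Fin m) (hp : (p : ℕ) = u.length) :
    seqOf (u ++ i :: w) h p = i := by
  simp [seqOf, hp]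

lemma seqOf_append_cons_cons (u : List (Fin N)) (i j : Fin N) (w : List (Fin N))
    (h : (u ++ i :: j :: w).length = m) (p : Fin m) (hp : (p : ℕ) = u.length + 1) :
    seqOf (u ++ i :: j :: w) h p = j := by
  simp [seqOf, hp]

lemma seqOf_append_cons_cons_cons (u : List (Fin N)) (i j l : Fin N) (w : List (Fin N))
    (h : (u ++ i :: j :: l :: w).length = m) (p : Fin m) (hp : (p : ℕ) = u.length + 2) :
    seqOf (u ++ i :: j :: l :: w) h p = l := by
  simp [seqOf, hp]

lemma swapSeq_seqOf (u : List (Fin N)) (i j : Fin N) (w : List (Fin N)) (hl : u.length + 1 < m)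
    (h : (u ++ i :: j :: w).length = m) (h' : (u ++ j :: i :: w).length = m) :
    swapSeq u.length hl (seqOf (u ++ i :: j :: w) h) = seqOf (u ++ j :: i :: w) h' := by
  funext p
  simp only [swapSeq, posSwap, Function.comp_apply, Equiv.swap_apply_def]
  split_ifs with h0 h1
  · subst h0
    rw [seqOf_append_cons_cons _ _ _ _ _ _ rfl, seqOf_append_cons _ _ _ _ _ rfl]
  · subst h1
    rw [seqOf_append_cons _ _ _ _ _ rfl, seqOf_append_cons_cons _ _ _ _ _ _ rfl]
  · rw [Fin.ext_iff] at h0 h1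
    by_cases hp : (p : ℕ) < u.length
    · simp [seqOf, hp]
    · obtain ⟨q, hq⟩ : ∃ q, (p : ℕ) = u.length + (q + 2) := ⟨p - u.length - 2, by grind⟩
      simp [seqOf, hq]

end Sequences

lemma exists_eq_append_cons_cons {α : Type*} {L : List α} {p : ℕ} (h : p + 1 < L.length) :
    ∃ u i j w, u.length = p ∧ L = u ++ i :: j :: w :=
  ⟨L.take p, L[p], L[p + 1], L.drop (p + 2), by simp; omega, by simp⟩

lemma exists_eq_append_cons_cons_cons {α : Type*} {L : List α} {p : ℕ} (h : p + 2 < L.length) :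
    ∃ u i j l w, u.length = p ∧ L = u ++ i :: j :: l :: w :=
  ⟨L.take p, L[p], L[p + 1], L[p + 2], L.drop (p + 3), by simp; omega, by simp⟩

/-- The cyclotomic quiver Hecke algebra on `m` strands, summed over all weights. -/
abbrev CyclotomicQHA (k : Type) [Field k] {N : ℕ} (Q : Fin N → Fin N → MvPolynomial (Fin 2) k)
    (Λ : Fin N → ℤ) (m : ℕ) : Type :=
  RingQuot (CRel k Q (Set.univ : Set (Fin m → Fin N)) Λ)

namespace CyclotomicQHA

variable {k : Type} [Field k] {N m : ℕ} {Q : Fin N → Fin N → MvPolynomial (Fin 2) k}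
  {Λ : Fin N → ℤ}

local notation "𝓡" => CyclotomicQHA k Q Λ m

/-- The quotient map from the free algebra. -/
noncomputable def mk : FA k N m →ₐ[k] 𝓡 := RingQuot.mkAlgHom k _

lemma mk_surjective : Function.Surjective (mk : FA k N m → 𝓡) := RingQuot.mkAlgHom_surjective k _

lemma mk_eq_of_rel {a b : FA k N m} (h : Rel k Q Set.univ a b) : (mk a : 𝓡) = mk b :=
  RingQuot.mkAlgHom_rel k (Or.inl h)

lemma mk_eq_of_cycRel {a b : FA k N m} (h : CycRel k Λ Set.univ a b) : (mk a : 𝓡) = mk b :=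
  RingQuot.mkAlgHom_rel k (Or.inr h)

/-- The idempotent of a word; it is `0` when the word does not have length `m`. -/
noncomputable def idem (L : List (Fin N)) : 𝓡 :=
  if h : L.length = m then mk (Eg k (seqOf L h)) else 0

/-- The polynomial generator on strand `p`; it is `0` when there is no such strand. -/
noncomputable def dot (p : ℕ) : 𝓡 := if h : p < m then mk (Xg k ⟨p, h⟩) else 0

/-- The intertwiner of the strands `p` and `p + 1`; it is `0` when there are no such strands. -/
noncomputable def cross (p : ℕ) : 𝓡 := if h : p + 1 < m then mk (Tg k p h) else 0

lemma idem_eq_mk {L : List (Fin N)} (h : L.length = m) : (idem L : 𝓡) = mk (Eg k (seqOf L h)) :=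
  dif_pos h

lemma idem_eq_zero {L : List (Fin N)} (h : L.length ≠ m) : (idem L : 𝓡) = 0 := dif_neg h

lemma dot_eq_mk {p : ℕ} (h : p < m) : (dot p : 𝓡) = mk (Xg k ⟨p, h⟩) := dif_pos h

lemma dot_eq_zero {p : ℕ} (h : m ≤ p) : (dot p : 𝓡) = 0 := dif_neg h.not_gt

lemma cross_eq_mk {p : ℕ} (h : p + 1 < m) : (cross p : 𝓡) = mk (Tg k p h) := dif_pos h

lemma cross_eq_zero {p : ℕ} (h : m ≤ p + 1) : (cross p : 𝓡) = 0 := dif_neg h.not_gt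

lemma idem_ofFn (ν : Fin m → Fin N) : (idem (List.ofFn ν) : 𝓡) = mk (Eg k ν) := by
  rw [idem_eq_mk List.length_ofFn, seqOf_ofFn]

lemma idem_mul_idem_of_ne {L L' : List (Fin N)} (h : L ≠ L') : (idem L * idem L' : 𝓡) = 0 := by
  by_cases hL : L.length = m
  · by_cases hL' : L'.length = m
    · rw [idem_eq_mk hL, idem_eq_mk hL', ← map_mul, mk_eq_of_rel (.e_orth _ _ ?_), map_zero]
      intro hseq
      apply h
      rw [← ofFn_seqOf L hL, hseq, ofFn_seqOf]
    · rw [idem_eq_zero hL', mul_zero]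
  · rw [idem_eq_zero hL, zero_mul]

lemma idem_mul_self (L : List (Fin N)) : (idem L * idem L : 𝓡) = idem L := by
  by_cases hL : L.length = m
  · rw [idem_eq_mk hL, ← map_mul, mk_eq_of_rel (.e_idem _)]
  · rw [idem_eq_zero hL, mul_zero]

lemma sum_idem : ∑ ν : Fin m → Fin N, (idem (List.ofFn ν) : 𝓡) = 1 := by
  simp only [idem_ofFn]
  rw [← map_sum, mk_eq_of_rel .e_sum, map_one]

lemma eq_of_mul_idem_eq {a b : 𝓡} (h : ∀ L : List (Fin N), L.length = m → a * idem L = b * idem L) :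
    a = b := by
  rw [← mul_one a, ← mul_one b, ← sum_idem, Finset.mul_sum, Finset.mul_sum]
  exact Finset.sum_congr rfl fun ν _ => h _ List.length_ofFn

lemma dot_mul_idem (p : ℕ) (L : List (Fin N)) : (dot p * idem L : 𝓡) = idem L * dot p := by
  by_cases hL : L.length = m
  · rcases lt_or_ge p m with hp | hp
    · rw [idem_eq_mk hL, dot_eq_mk hp, ← map_mul, mk_eq_of_rel (.xe _ _), map_mul]
    · rw [dot_eq_zero hp, zero_mul, mul_zero]
  · rw [idem_eq_zero hL, zero_mul, mul_zero]

lemma cross_mul_idem (u : List (Fin N)) (i j : Fin N) (w : List (Fin N)) :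
    (cross u.length * idem (u ++ i :: j :: w) : 𝓡) =
      idem (u ++ j :: i :: w) * cross u.length := by
  by_cases hL : (u ++ i :: j :: w).length = m
  · have hL' : (u ++ j :: i :: w).length = m := by simpa using hL
    have hu : u.length + 1 < m := by simp at hL; omega
    rw [idem_eq_mk hL, idem_eq_mk hL', cross_eq_mk hu, ← map_mul, mk_eq_of_rel (.te _ _ _),
      map_mul, swapSeq_seqOf u i j w hu hL hL']
  · have hL' : (u ++ j :: i :: w).length ≠ m := by simpa using hL
    rw [idem_eq_zero hL, idem_eq_zero hL', zero_mul, mul_zero]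

lemma cross_mul_cross_of_lt {a b : ℕ} (h : a + 1 < b) :
    (cross a * cross b : 𝓡) = cross b * cross a := by
  rcases lt_or_ge (b + 1) m with hb | hb
  · rw [cross_eq_mk hb, cross_eq_mk (by omega : a + 1 < m), ← map_mul, ← map_mul,
      mk_eq_of_rel (.tt _ _ _ _ (Or.inl h))]
  · rw [cross_eq_zero hb, mul_zero, zero_mul]

lemma cross_mul_cross_mul_idem (u : List (Fin N)) (i j : Fin N) (w : List (Fin N)) :
    (cross u.length * cross u.length * idem (u ++ i :: j :: w) : 𝓡) =
      eval2 k (Q i j) (dot u.length) (dot (u.length + 1)) * idem (u ++ i :: j :: w) := by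
  by_cases hL : (u ++ i :: j :: w).length = m
  · have hu : u.length + 1 < m := by simp at hL; omega
    have h := mk_eq_of_rel (Q := Q) (Λ := Λ) (.tsq u.length hu (seqOf _ hL))
    rw [seqOf_append_cons _ _ _ _ _ rfl, seqOf_append_cons_cons _ _ _ _ _ _ rfl] at h
    simpa only [idem_eq_mk hL, cross_eq_mk hu, dot_eq_mk hu, dot_eq_mk (Nat.lt_of_succ_lt hu),
      map_mul, map_eval2] using h
  · simp only [idem_eq_zero hL, mul_zero]

lemma cross_mul_dot_mul_idem_self (u : List (Fin N)) (i : Fin N) (w : List (Fin N)) :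
    (cross u.length * dot (u.length + 1) * idem (u ++ i :: i :: w) : 𝓡) =
      dot u.length * cross u.length * idem (u ++ i :: i :: w) + idem (u ++ i :: i :: w) := by
  by_cases hL : (u ++ i :: i :: w).length = m
  · have hu : u.length + 1 < m := by simp at hL; omega
    have h := mk_eq_of_rel (Q := Q) (Λ := Λ) (.tx_right u.length hu (seqOf _ hL) (by
      rw [seqOf_append_cons _ _ _ _ _ rfl, seqOf_append_cons_cons _ _ _ _ _ _ rfl]))
    simpa only [idem_eq_mk hL, cross_eq_mk hu, dot_eq_mk hu, dot_eq_mk (Nat.lt_of_succ_lt hu),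
      map_mul, map_add] using h
  · simp only [idem_eq_zero hL, mul_zero, add_zero]

lemma cross_mul_dot_mul_idem_of_ne (u : List (Fin N)) {i j : Fin N} (hij : i ≠ j)
    (w : List (Fin N)) :
    (cross u.length * dot (u.length + 1) * idem (u ++ i :: j :: w) : 𝓡) =
      dot u.length * cross u.length * idem (u ++ i :: j :: w) := by
  by_cases hL : (u ++ i :: j :: w).length = m
  · have hu : u.length + 1 < m := by simp at hL; omega
    have h := mk_eq_of_rel (Q := Q) (Λ := Λ) (.tx_comm u.length hu (seqOf _ hL) ⟨_, hu⟩ (Or.inl (by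
      rwa [seqOf_append_cons _ _ _ _ _ rfl, seqOf_append_cons_cons _ _ _ _ _ _ rfl])))
    rw [posSwap, Equiv.swap_apply_right] at h
    simpa only [idem_eq_mk hL, cross_eq_mk hu, dot_eq_mk hu, dot_eq_mk (Nat.lt_of_succ_lt hu),
      map_mul] using h
  · simp only [idem_eq_zero hL, mul_zero]

lemma cross_mul_dot_mul_idem_of_far {p q : ℕ} (h0 : q ≠ p) (h1 : q ≠ p + 1)
    (L : List (Fin N)) : (cross p * dot q * idem L : 𝓡) = dot q * cross p * idem L := by
  by_cases hL : L.length = m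
  · rcases lt_or_ge (p + 1) m with hp | hp
    · rcases lt_or_ge q m with hq | hq
      · have h := mk_eq_of_rel (Q := Q) (Λ := Λ)
          (.tx_comm p hp (seqOf _ hL) ⟨q, hq⟩ (Or.inr ⟨h0, h1⟩))
        rw [posSwap, Equiv.swap_apply_of_ne_of_ne (by simpa using h0) (by simpa using h1)] at h
        simpa only [idem_eq_mk hL, cross_eq_mk hp, dot_eq_mk hq, map_mul] using h
      · simp only [dot_eq_zero hq, mul_zero, zero_mul]
    · simp only [cross_eq_zero hp, mul_zero, zero_mul]
  · simp only [idem_eq_zero hL, mul_zero]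

lemma braid_mul_idem_of_ne (u : List (Fin N)) {i l : Fin N} (hil : i ≠ l) (j : Fin N)
    (w : List (Fin N)) :
    (cross (u.length + 1) * cross u.length * cross (u.length + 1) *
        idem (u ++ i :: j :: l :: w) : 𝓡) =
      cross u.length * cross (u.length + 1) * cross u.length * idem (u ++ i :: j :: l :: w) := by
  by_cases hL : (u ++ i :: j :: l :: w).length = m
  · have hu : u.length + 2 < m := by simp at hL; omega
    have h := mk_eq_of_rel (Q := Q) (Λ := Λ) (.braid_ne u.length (by omega) hu (seqOf _ hL) (by
      rwa [seqOf_append_cons _ _ _ _ _ rfl, seqOf_append_cons_cons_cons _ _ _ _ _ _ _ rfl]))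
    simpa only [idem_eq_mk hL, cross_eq_mk (by omega : u.length + 1 < m),
      cross_eq_mk (by omega : u.length + 1 + 1 < m), map_mul] using h
  · simp only [idem_eq_zero hL, mul_zero]

lemma braid_mul_idem_self (u : List (Fin N)) (i j : Fin N) (w : List (Fin N)) :
    (cross (u.length + 1) * cross u.length * cross (u.length + 1) *
        idem (u ++ i :: j :: i :: w) : 𝓡) =
      cross u.length * cross (u.length + 1) * cross u.length * idem (u ++ i :: j :: i :: w) +
        eval3 k (Qbar k (Q i j)) (dot u.length) (dot (u.length + 1)) (dot (u.length + 2)) *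
          idem (u ++ i :: j :: i :: w) := by
  by_cases hL : (u ++ i :: j :: i :: w).length = m
  · have hu : u.length + 2 < m := by simp at hL; omega
    have h := mk_eq_of_rel (Q := Q) (Λ := Λ) (.braid_eq u.length (by omega) hu (seqOf _ hL) (by
      rw [seqOf_append_cons _ _ _ _ _ rfl, seqOf_append_cons_cons_cons _ _ _ _ _ _ _ rfl]))
    rw [seqOf_append_cons _ _ _ _ _ rfl, seqOf_append_cons_cons _ _ _ _ _ _ rfl] at h
    simpa only [idem_eq_mk hL, cross_eq_mk (by omega : u.length + 1 < m),
      cross_eq_mk (by omega : u.length + 1 + 1 < m), dot_eq_mk (by omega : u.length < m),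
      dot_eq_mk (by omega : u.length + 1 < m), dot_eq_mk hu, map_mul, map_add, map_eval3] using h
  · simp only [idem_eq_zero hL, mul_zero, add_zero]

lemma dot_pow_mul_idem_last (u : List (Fin N)) (i : Fin N) :
    (dot u.length ^ (Λ i).toNat * idem (u ++ [i]) : 𝓡) = 0 := by
  by_cases hL : (u ++ [i]).length = m
  · have hu : u.length + 1 = m := by simpa using hL
    have h := mk_eq_of_cycRel (Q := Q)
      (.cyc (Λ := Λ) (seqOf _ hL) (Set.mem_univ _) ⟨u.length, by omega⟩ hu)
    rw [seqOf_append_cons _ _ _ _ _ rfl] at h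
    simpa only [idem_eq_mk hL, dot_eq_mk (by omega : u.length < m), map_mul, map_pow,
      map_zero] using h
  · rw [idem_eq_zero hL, mul_zero]

lemma eq_top_of_generators_mul_mem {V : Submodule k 𝓡} (h1 : 1 ∈ V)
    (hidem : ∀ L, ∀ v ∈ V, idem L * v ∈ V) (hdot : ∀ p, ∀ v ∈ V, dot p * v ∈ V)
    (hcross : ∀ p, ∀ v ∈ V, cross p * v ∈ V) : V = ⊤ := by
  have hmk : ∀ a : FA k N m, ∀ v ∈ V, mk a * v ∈ V := by
    intro a
    induction a using FreeAlgebra.induction with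
    | grade0 r =>
      intro v hv
      rw [AlgHom.commutes, ← Algebra.smul_def]
      exact V.smul_mem _ hv
    | grade1 g =>
      intro v hv
      cases g with
      | e ν => exact idem_ofFn (Q := Q) (Λ := Λ) ν ▸ hidem _ v hv
      | x p => exact dot_eq_mk (Q := Q) (Λ := Λ) p.2 ▸ hdot _ v hv
      | t j h => exact cross_eq_mk (Q := Q) (Λ := Λ) h ▸ hcross _ v hv
    | mul a b ha hb =>
      intro v hv
      rw [map_mul, mul_assoc]
      exact ha _ (hb _ hv)
    | add a b ha hb =>
      intro v hv
      rw [map_add, add_mul]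
      exact V.add_mem (ha _ hv) (hb _ hv)
  refine eq_top_iff.2 fun r _ => ?_
  obtain ⟨a, rfl⟩ := mk_surjective r
  simpa only [mul_one] using hmk a 1 h1

/-! ### Vanishing of dots and of idempotents off the crystal paths -/

variable {A : Fin N → Fin N → ℤ} {d : Fin N → ℤ}

/-- The `b`-th power of the dot on the first letter of `w` kills every idempotent of a word ending
with `w`. For `b = 0` this says that all these idempotents vanish. -/
def Killed (Q : Fin N → Fin N → MvPolynomial (Fin 2) k) (Λ : Fin N → ℤ) (m b : ℕ)
    (w : List (Fin N)) : Prop :=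
  ∀ u, (dot u.length ^ b * idem (u ++ w) : CyclotomicQHA k Q Λ m) = 0

lemma killed_zero_iff {w : List (Fin N)} :
    Killed Q Λ m 0 w ↔ ∀ u, (idem (u ++ w) : 𝓡) = 0 := by
  simp [Killed]

lemma killed_one_iff {w : List (Fin N)} :
    Killed Q Λ m 1 w ↔ ∀ u, (dot u.length * idem (u ++ w) : 𝓡) = 0 := by
  simp [Killed]

lemma Killed.of_zero {w : List (Fin N)} (h : Killed Q Λ m 0 w) (b : ℕ) : Killed Q Λ m b w :=
  fun u => by rw [killed_zero_iff.1 h, mul_zero]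

lemma Killed.zero_cons {w : List (Fin N)} (h : Killed Q Λ m 0 w) (i : Fin N) :
    Killed Q Λ m 0 (i :: w) :=
  killed_zero_iff.2 fun u => by simpa using killed_zero_iff.1 h (u ++ [i])

lemma Killed.dot_pow_mul_idem_cons {b : ℕ} {w : List (Fin N)} (h : Killed Q Λ m b w)
    (u : List (Fin N)) (i : Fin N) : (dot (u.length + 1) ^ b * idem (u ++ i :: w) : 𝓡) = 0 := by
  simpa using h (u ++ [i])

lemma idem_eq_cross_mul_idem_mul_cross (u : List (Fin N)) {i j : Fin N} (hij : Q i j = 1)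
    (w : List (Fin N)) :
    (idem (u ++ i :: j :: w) : 𝓡) =
      cross u.length * idem (u ++ j :: i :: w) * cross u.length := by
  rw [mul_assoc, ← cross_mul_idem, ← mul_assoc, cross_mul_cross_mul_idem, hij, eval2_one, one_mul]

lemma dot_pow_mul_cross_mul_idem {p q q' : ℕ} {L : List (Fin N)}
    (h : (cross p * dot q' * idem L : 𝓡) = dot q * cross p * idem L) (b : ℕ) :
    (dot q ^ b * (cross p * idem L) : 𝓡) = cross p * (dot q' ^ b * idem L) := by
  induction b with
  | zero => simp
  | succ b ih =>
    calc (dot q ^ (b + 1) * (cross p * idem L) : 𝓡)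
        = dot q ^ b * (cross p * idem L) * dot q' := by
          rw [pow_succ, mul_assoc, ← mul_assoc (dot q), ← h, mul_assoc (cross p), dot_mul_idem]
          simp only [mul_assoc]
      _ = cross p * (dot q' ^ (b + 1) * idem L) := by
          rw [ih, pow_succ, mul_assoc _ (dot q'), dot_mul_idem]
          simp only [mul_assoc]

lemma Killed.swap {b : ℕ} {l : Fin N} {y : List (Fin N)} {i j : Fin N} {s : List (Fin N)}
    (hij : Q i j = 1) (h : Killed Q Λ m b (l :: y ++ j :: i :: s)) :
    Killed Q Λ m b (l :: y ++ i :: j :: s) := by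
  intro u
  rw [← List.append_assoc, idem_eq_cross_mul_idem_mul_cross _ hij, ← mul_assoc,
    dot_pow_mul_cross_mul_idem
      (cross_mul_dot_mul_idem_of_far (by simp) (by simp; omega) _), List.append_assoc, h u,
    mul_zero, zero_mul]

lemma Killed.move {b : ℕ} {l i : Fin N} {v : List (Fin N)} (hv : ∀ c ∈ v, Q c i = 1)
    {y r : List (Fin N)} (h : Killed Q Λ m b (l :: y ++ i :: (v ++ r))) :
    Killed Q Λ m b (l :: y ++ (v ++ i :: r)) := by
  induction v generalizing y with
  | nil => exact h
  | cons c v ih =>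
    have hc := ih (fun d hd => hv d (List.mem_cons_of_mem _ hd)) (y := y ++ [c])
    simp only [List.append_assoc, List.cons_append] at hc
    exact hc (h.swap (hv c List.mem_cons_self))

lemma Killed.insert_second {b : ℕ} {i c : Fin N} {s : List (Fin N)} (hic : c ≠ i)
    (hQ : Q i c = 1) (h : Killed Q Λ m b (i :: s)) : Killed Q Λ m b (i :: c :: s) := by
  intro u
  rw [idem_eq_cross_mul_idem_mul_cross _ hQ, ← mul_assoc,
    dot_pow_mul_cross_mul_idem (cross_mul_dot_mul_idem_of_ne u hic s), h.dot_pow_mul_idem_cons,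
    mul_zero, zero_mul]

lemma Killed.insert {b : ℕ} {i : Fin N} {v : List (Fin N)} (hv : ∀ c ∈ v, c ≠ i ∧ Q i c = 1)
    {r : List (Fin N)} (h : Killed Q Λ m b (i :: r)) : Killed Q Λ m b (i :: (v ++ r)) := by
  induction v with
  | nil => exact h
  | cons c v ih =>
    exact (ih fun d hd => hv d (List.mem_cons_of_mem _ hd)).insert_second
      (hv c List.mem_cons_self).1 (hv c List.mem_cons_self).2

lemma Killed.cons_self {i : Fin N} {w : List (Fin N)} (hQ : Q i i = 0)
    (h : Killed Q Λ m 1 (i :: w)) : Killed Q Λ m 0 (i :: i :: w) := by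
  refine killed_zero_iff.2 fun u => ?_
  set e : 𝓡 := idem (u ++ i :: i :: w)
  have hte : cross u.length * e = e * cross u.length := cross_mul_idem u i i w
  have htt : cross u.length * cross u.length * e = 0 := by
    rw [cross_mul_cross_mul_idem, hQ, eval2_zero, zero_mul]
  have he : dot u.length * cross u.length * e + e = 0 := by
    have hdot := h.dot_pow_mul_idem_cons u i
    rw [pow_one] at hdot
    rw [← cross_mul_dot_mul_idem_self, mul_assoc, hdot, mul_zero]
  have het : e * cross u.length = 0 := by
    calc e * cross u.length
        = dot u.length * (cross u.length * cross u.length * e) + e * cross u.length := by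
          rw [htt, mul_zero, zero_add]
      _ = (dot u.length * cross u.length * e + e) * cross u.length := by
          rw [add_mul, mul_assoc (cross _), hte]
          simp only [mul_assoc]
      _ = 0 := by rw [he, zero_mul]
  rwa [mul_assoc, hte, het, mul_zero, zero_add] at he

lemma Killed.quadratic (hQ : QAdmissible k A d Q) {i j : Fin N} (hd : d i ≠ 0) (hij : i ≠ j)
    {w : List (Fin N)} (hj : Killed Q Λ m 1 (j :: w)) (hi : Killed Q Λ m 0 (i :: w)) :
    Killed Q Λ m (-A i j).toNat (i :: j :: w) := by
  intro u
  have hsq := cross_mul_cross_mul_idem (Q := Q) (Λ := Λ) (m := m) u i j w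
  have hdot := hj.dot_pow_mul_idem_cons u i
  rw [pow_one] at hdot
  rw [mul_assoc, cross_mul_idem, killed_zero_iff.1 (hi.zero_cons j), zero_mul, mul_zero,
    eval2_mul_of_mul_eq_zero (fun b hb => hQ.eq_of_coeff_ne_zero hd hij hb) _ hdot] at hsq
  exact (smul_eq_zero.1 hsq.symm).resolve_left (hQ.coeff_ne_zero hij)

lemma Killed.braid (hQ : QAdmissible k A d Q) {i j : Fin N} (hd : d i ≠ 0) (hij : i ≠ j) {b : ℕ}
    (hb : A i j = -(b + 1)) {s : List (Fin N)} (hs : Killed Q Λ m 1 (i :: s))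
    (hjs : Killed Q Λ m 1 (i :: j :: s)) (hji : Killed Q Λ m 1 (j :: i :: s)) :
    Killed Q Λ m b (i :: j :: i :: s) := by
  intro u
  have hb' : (-A i j).toNat = b + 1 := by omega
  have hbraid := braid_mul_idem_self (Q := Q) (Λ := Λ) (m := m) u i j s
  have hleft : (cross (u.length + 1) * idem (u ++ i :: j :: i :: s) : 𝓡) = 0 := by
    have h := cross_mul_idem (Q := Q) (Λ := Λ) (m := m) (u ++ [i]) j i s
    simp only [List.append_assoc, List.singleton_append, List.length_append,
      List.length_singleton] at h
    rw [h, killed_zero_iff.1 (hjs.cons_self (hQ.self_eq_zero i)), zero_mul]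
  have hright : (cross u.length * idem (u ++ i :: j :: i :: s) : 𝓡) = 0 := by
    rw [cross_mul_idem,
      killed_zero_iff.1 ((hs.cons_self (hQ.self_eq_zero i)).zero_cons j), zero_mul]
  have hy : (dot (u.length + 1) * idem (u ++ i :: j :: i :: s) : 𝓡) = 0 := by
    simpa using hji.dot_pow_mul_idem_cons u i
  have hz : (dot (u.length + 2) * idem (u ++ i :: j :: i :: s) : 𝓡) = 0 := by
    simpa using hs.dot_pow_mul_idem_cons (u ++ [i]) j
  rw [mul_assoc, hleft, mul_zero, mul_assoc _ (cross u.length), hright, mul_zero, zero_add,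
    eval3_mul_of_mul_eq_zero (a := b) (fun c hc => ?_) _ hy hz, coeff_single_Qbar, ← hb'] at hbraid
  · exact (smul_eq_zero.1 hbraid.symm).resolve_left (hQ.coeff_ne_zero hij)
  · rw [coeff_single_Qbar] at hc
    have := hQ.eq_of_coeff_ne_zero hd hij hc
    omega

/-- The dot on the first letter of `w` vanishes on all words ending with `w`, and so do the
idempotents of these words unless `w` is a crystal path. -/
def Vanishes (A : Fin N → Fin N → ℤ) (Q : Fin N → Fin N → MvPolynomial (Fin 2) k)
    (Λ : Fin N → ℤ) (m : ℕ) (w : List (Fin N)) : Prop :=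
  Killed Q Λ m 1 w ∧ (¬IsPath A Λ w → Killed Q Λ m 0 w)

lemma Vanishes.of_killed_zero {w : List (Fin N)} (h : Killed Q Λ m 0 w) : Vanishes A Q Λ m w :=
  ⟨h.of_zero 1, fun _ => h⟩

lemma vanishes_nil : Vanishes A Q Λ m [] := by
  refine ⟨killed_one_iff.2 fun u => ?_, fun h => absurd isPath_nil h⟩
  by_cases hu : u.length = m
  · rw [dot_eq_zero hu.ge, zero_mul]
  · rw [idem_eq_zero (by simpa using hu), mul_zero]

lemma vanishes_singleton (hΛ : IsMinuscule A Λ) (i : Fin N) : Vanishes A Q Λ m [i] := by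
  have hlast : Killed Q Λ m (Λ i).toNat [i] := fun u => dot_pow_mul_idem_last u i
  have hle := (hΛ.weight_mem [] isPath_nil i).2
  rw [pathWeight_nil] at hle
  obtain h0 | h1 : Λ i = 0 ∨ Λ i = 1 := by have := hΛ.dominant i; omega
  · rw [h0] at hlast
    exact .of_killed_zero hlast
  · rw [h1] at hlast
    exact ⟨hlast, fun h => absurd (isPath_cons.2 ⟨isPath_nil, by rw [pathWeight_nil, h1]⟩) h⟩

/-- When the weight of `w` at `i` is `0`, the quadratic relation gives the claim; when it is `-1`,
the letter `i` occurs in `w` behind letters orthogonal to it, and the braid relation for `i j i`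
applies. -/
lemma vanishes_cons_cons_of_adjacent (hΛ : IsMinuscule A Λ) (hQ : QAdmissible k A d Q)
    {i j : Fin N} (hd : d i ≠ 0) (hij : i ≠ j) (hA : A i j ≠ 0) {w : List (Fin N)}
    (hw : IsPath A Λ (j :: w)) (ih : ∀ z, z.length ≤ w.length + 1 → Vanishes A Q Λ m z) :
    Vanishes A Q Λ m (i :: j :: w) := by
  have hneg := hΛ.neg_of_adjacent hij hA
  have hne := hΛ.weight_ne_one_of_adjacent hij hA hw
  have hmem := hΛ.weight_mem w (isPath_cons.1 hw).1 i
  have hmem' := hΛ.weight_mem _ hw i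
  have hiff := isPath_cons (A := A) (Λ := Λ) (j := i) (w := j :: w)
  rw [pathWeight_cons_apply, Set.mem_Icc] at hmem'
  rw [pathWeight_cons_apply] at hiff
  obtain h0 | h1 : pathWeight A Λ w i = 0 ∨ pathWeight A Λ w i = -1 := by
    rw [Set.mem_Icc] at hmem; omega
  · have hAij : A i j = -1 := by omega
    have hi : Killed Q Λ m 0 (i :: w) := (ih _ le_rfl).2 fun h => hne (isPath_cons.1 h).2
    have hquad := ((ih (j :: w) le_rfl).1).quadratic hQ hd hij hi
    rw [hAij] at hquad
    exact ⟨hquad, fun h => absurd (hiff.2 ⟨hw, by omega⟩) h⟩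
  · obtain ⟨v, s, rfl, hv⟩ := hΛ.exists_append_cons_of_weight_neg (isPath_cons.1 hw).1 h1
    have hvQ : ∀ c ∈ v, Q c i = 1 := fun c hc =>
      hQ.eq_one (hΛ.ne_of_zero (hv c hc)).symm (hΛ.zero_symm _ _ (hv c hc))
    have hbraid : ∀ b : ℕ, A i j = -(b + 1) → Killed Q Λ m b (i :: j :: (v ++ i :: s)) :=
      fun b hb => Killed.move (y := [j]) hvQ <| Killed.braid hQ hd hij hb
        (ih _ (by simp)).1 (ih _ (by simp)).1 (ih _ (by simp)).1
    obtain hA1 | hA2 : A i j = -1 ∨ A i j = -2 := by omega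
    · exact .of_killed_zero (hbraid 0 hA1)
    · exact ⟨hbraid 1 hA2, fun h => absurd (hiff.2 ⟨hw, by omega⟩) h⟩

lemma Vanishes.insert (hΛ : IsMinuscule A Λ) (hQ : QAdmissible k A d Q) {i : Fin N}
    {v r : List (Fin N)} (hv : ∀ c ∈ v, A i c = 0) (hvr : IsPath A Λ (v ++ r))
    (h : Vanishes A Q Λ m (i :: r)) : Vanishes A Q Λ m (i :: (v ++ r)) := by
  have hvQ : ∀ c ∈ v, c ≠ i ∧ Q i c = 1 := fun c hc =>
    ⟨(hΛ.ne_of_zero (hv c hc)).symm, hQ.eq_one (hΛ.ne_of_zero (hv c hc)) (hv c hc)⟩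
  refine ⟨h.1.insert hvQ, fun hp => (h.2 fun hir => hp (isPath_cons.2 ⟨hvr, ?_⟩)).insert hvQ⟩
  rw [pathWeight_append_of_orthogonal hv]
  exact (isPath_cons.1 hir).2

theorem vanishes (hΛ : IsMinuscule A Λ) (hQ : QAdmissible k A d Q) (hd : ∀ i, d i ≠ 0)
    (w : List (Fin N)) : Vanishes A Q Λ m w := by
  induction hn : w.length using Nat.strong_induction_on generalizing w with
  | _ n ih =>
  subst hn
  cases w with
  | nil => exact vanishes_nil
  | cons i w =>
    have ih' : ∀ z : List (Fin N), z.length ≤ w.length → Vanishes A Q Λ m z := fun z hz =>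
      ih z.length (Nat.lt_succ_of_le hz) z rfl
    by_cases hw : IsPath A Λ w
    · obtain ⟨v, r, rfl, hv, hr⟩ := exists_append_of_orthogonal A i w
      refine Vanishes.insert hΛ hQ hv hw ?_
      cases r with
      | nil => exact vanishes_singleton hΛ i
      | cons j r =>
        obtain rfl | hij := eq_or_ne i j
        · exact .of_killed_zero ((ih' _ (by simp)).1.cons_self (hQ.self_eq_zero i))
        · exact vanishes_cons_cons_of_adjacent hΛ hQ (hd i) hij (hr j rfl) hw.of_append
            fun z hz => ih' z (by simp; omega)
    · exact .of_killed_zero (((ih' w le_rfl).2 hw).zero_cons i)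

section Consequences

variable (hΛ : IsMinuscule A Λ) (hQ : QAdmissible k A d Q) (hd : ∀ i, d i ≠ 0)
include hΛ hQ hd

lemma idem_eq_zero_of_not_isPath {L : List (Fin N)} (hL : ¬IsPath A Λ L) : (idem L : 𝓡) = 0 :=
  killed_zero_iff.1 ((vanishes hΛ hQ hd L).2 hL) []

lemma dot_mul_idem_eq_zero (p : ℕ) (L : List (Fin N)) : (dot p * idem L : 𝓡) = 0 := by
  by_cases hp : p ≤ L.length
  · have h := killed_one_iff.1 (vanishes (m := m) hΛ hQ hd (L.drop p)).1 (L.take p)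
    rwa [List.take_append_drop, List.length_take, min_eq_left hp] at h
  · by_cases hL : L.length = m
    · rw [dot_eq_zero (by omega), zero_mul]
    · rw [idem_eq_zero hL, mul_zero]

lemma dot_eq_zero_of_isMinuscule (p : ℕ) : (dot p : 𝓡) = 0 :=
  eq_of_mul_idem_eq fun L _ => by rw [dot_mul_idem_eq_zero hΛ hQ hd, zero_mul]

lemma cross_mul_idem_eq_zero {u : List (Fin N)} {i j : Fin N} {w : List (Fin N)}
    (hA : A i j ≠ 0) : (cross u.length * idem (u ++ i :: j :: w) : 𝓡) = 0 := by
  by_cases hij : i = j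
  · subst hij
    have hdot := (vanishes (m := m) hΛ hQ hd (i :: w)).1
    rw [killed_zero_iff.1 (hdot.cons_self (hQ.self_eq_zero i)), mul_zero]
  · by_cases hp : IsPath A Λ (j :: w)
    · rw [cross_mul_idem, idem_eq_zero_of_not_isPath hΛ hQ hd fun h => ?_, zero_mul]
      exact hΛ.weight_ne_one_of_adjacent hij hA hp (isPath_cons.1 (isPath_cons.1 h.of_append).1).2
    · rw [idem_eq_zero_of_not_isPath hΛ hQ hd fun h => hp (isPath_cons.1 h.of_append).1, mul_zero]

omit hΛ hd in
lemma cross_mul_cross_mul_idem_of_zero {u : List (Fin N)} {i j : Fin N} {w : List (Fin N)}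
    (hij : i ≠ j) (hA : A i j = 0) :
    (cross u.length * (cross u.length * idem (u ++ i :: j :: w)) : 𝓡) =
      idem (u ++ i :: j :: w) := by
  rw [← mul_assoc, cross_mul_cross_mul_idem, hQ.eq_one hij hA, eval2_one, one_mul]

end Consequences

end CyclotomicQHA

/-! ### Transport elements for the braid relations -/

section Transport

variable {M : Type*} [Monoid M] {α : Type*} [DecidableEq α]

/-- A sequence of elements satisfying the defining relations of Artin's braid groups. -/
structure IsBraidFamily (t : ℕ → M) : Prop where
  comm : ∀ {a b}, a + 1 < b → t a * t b = t b * t a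
  braid : ∀ a, t (a + 1) * t a * t (a + 1) = t a * t (a + 1) * t a

/-- The product `t_r t_{r+1} ⋯ t_{r+a-1}`, which moves strand `r + a` to position `r`. -/
def slide (t : ℕ → M) : ℕ → ℕ → M
  | _, 0 => 1
  | r, a + 1 => t r * slide t (r + 1) a

/-- A product of generators turning the word `ν`, written from position `r` on, into its
rearrangement `μ`: the letters of `μ` are brought to their places one after the other. -/
def transport (t : ℕ → M) : ℕ → List α → List α → M
  | _, [], _ => 1
  | r, i :: μ, ν => transport t (r + 1) μ (ν.erase i) * slide t r (ν.idxOf i)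

lemma idxOf_erase_of_lt {i j : α} {l : List α} (h : l.idxOf i < l.idxOf j) :
    (l.erase j).idxOf i = l.idxOf i := by
  induction l with
  | nil => simp
  | cons c l ih => grind

lemma idxOf_erase_add_one_of_lt {i j : α} {l : List α} (h : l.idxOf i < l.idxOf j) :
    (l.erase i).idxOf j + 1 = l.idxOf j := by
  induction l with
  | nil => simp at h
  | cons c l ih => grind

lemma transport_self (t : ℕ → M) (r : ℕ) (ν : List α) : transport t r ν ν = 1 := by
  induction ν generalizing r with
  | nil => rfl
  | cons i ν ih => simp [transport, slide, ih]

namespace IsBraidFamily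

variable {t : ℕ → M} (h : IsBraidFamily t)
include h

lemma mul_slide_of_lt {j r : ℕ} (hj : j + 1 < r) (a : ℕ) :
    t j * slide t r a = slide t r a * t j := by
  induction a generalizing r with
  | zero => simp [slide]
  | succ a ih =>
    rw [slide, ← mul_assoc, h.comm hj, mul_assoc, ih (by omega), mul_assoc]

lemma slide_mul {r q b : ℕ} (hr : r ≤ q) (hq : q + 1 < r + b) :
    slide t r b * t q = t (q + 1) * slide t r b := by
  induction b generalizing r with
  | zero => omega
  | succ b ih =>
    obtain rfl | hlt := hr.eq_or_lt
    · obtain ⟨b, rfl⟩ : ∃ c, b = c + 1 := ⟨b - 1, by omega⟩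
      calc slide t r (b + 2) * t r
          = t r * t (r + 1) * (slide t (r + 2) b * t r) := by simp only [slide, mul_assoc]
        _ = t r * t (r + 1) * t r * slide t (r + 2) b := by
          rw [← h.mul_slide_of_lt (by omega)]
          simp only [mul_assoc]
        _ = t (r + 1) * slide t r (b + 2) := by
          rw [← h.braid]
          simp only [slide, mul_assoc]
    · rw [slide, mul_assoc, ih hlt (by omega), ← mul_assoc, h.comm (by omega), mul_assoc]

lemma slide_mul_slide {r q a b : ℕ} (hr : r ≤ q) (hq : q + a < r + b) :
    slide t r b * slide t q a = slide t (q + 1) a * slide t r b := by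
  induction a generalizing q with
  | zero => simp [slide]
  | succ a ih =>
    rw [slide, ← mul_assoc, h.slide_mul hr (by omega), mul_assoc,
      ih (by omega) (by omega), ← mul_assoc, slide]

lemma mul_transport_of_lt {j r : ℕ} (hj : j + 1 < r) (μ ν : List α) :
    t j * transport t r μ ν = transport t r μ ν * t j := by
  induction μ generalizing r ν with
  | nil => simp [transport]
  | cons i μ ih =>
    rw [transport, ← mul_assoc, ih (by omega), mul_assoc, h.mul_slide_of_lt hj, mul_assoc]

lemma mul_transport_cons_cons (r : ℕ) {i j : α} (w : List α) {ν : List α}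
    (hij : ν.idxOf i < ν.idxOf j) :
    t r * transport t r (i :: j :: w) ν = transport t r (j :: i :: w) ν := by
  calc t r * transport t r (i :: j :: w) ν
      = transport t (r + 2) w ((ν.erase i).erase j) *
          (slide t r ((ν.erase i).idxOf j + 1) * slide t r (ν.idxOf i)) := by
        simp only [transport, slide, ← mul_assoc, h.mul_transport_of_lt (Nat.lt_add_one (r + 1))]
    _ = transport t r (j :: i :: w) ν := by
        rw [idxOf_erase_add_one_of_lt hij, h.slide_mul_slide le_rfl (by omega), List.erase_comm]
        simp only [transport, idxOf_erase_of_lt hij, mul_assoc]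

end IsBraidFamily

end Transport

namespace CyclotomicQHA

variable {k : Type} [Field k] {N m : ℕ} {Q : Fin N → Fin N → MvPolynomial (Fin 2) k}
  {A : Fin N → Fin N → ℤ} {d : Fin N → ℤ} {Λ : Fin N → ℤ}

local notation "𝓡" => CyclotomicQHA k Q Λ m

lemma slide_mul_idem_append (p q : List (Fin N)) (i : Fin N) (s : List (Fin N)) :
    (slide cross p.length q.length * idem (p ++ (q ++ i :: s)) : 𝓡) =
      idem (p ++ i :: (q ++ s)) * slide cross p.length q.length := by
  induction q generalizing p with
  | nil => simp [slide]
  | cons c q ih =>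
    have h := ih (p ++ [c])
    simp only [List.append_assoc, List.singleton_append, List.length_append,
      List.length_singleton] at h
    rw [List.length_cons, slide, mul_assoc, List.cons_append, h, ← mul_assoc, cross_mul_idem,
      mul_assoc, List.cons_append]

lemma slide_mul_idem (p : List (Fin N)) {i : Fin N} {ν : List (Fin N)} (hi : i ∈ ν) :
    (slide cross p.length (ν.idxOf i) * idem (p ++ ν) : 𝓡) =
      idem (p ++ [i] ++ ν.erase i) * slide cross p.length (ν.idxOf i) := by
  obtain ⟨q, s, hq, rfl, herase⟩ := List.exists_erase_eq hi
  rw [herase, List.idxOf_append_of_notMem hq, List.idxOf_cons_self, add_zero,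
    slide_mul_idem_append, List.append_assoc, List.singleton_append]

lemma transport_mul_idem (p : List (Fin N)) {μ ν : List (Fin N)} (h : μ.Perm ν) :
    (transport cross p.length μ ν * idem (p ++ ν) : 𝓡) =
      idem (p ++ μ) * transport cross p.length μ ν := by
  induction μ generalizing p ν with
  | nil => simp [transport, h.nil_eq]
  | cons i μ ih =>
    obtain ⟨hi, herase⟩ := List.cons_perm_iff_perm_erase.1 h
    have hμ := ih (p ++ [i]) herase
    rw [List.length_append, List.length_singleton] at hμ
    rw [transport, mul_assoc, slide_mul_idem p hi, ← mul_assoc, hμ, mul_assoc, List.append_assoc,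
      List.singleton_append]

/-- The element carrying the idempotent of `p.2` to that of `p.1`. -/
noncomputable def pathUnit (p : PermPairs (IsPath A Λ) m) : 𝓡 :=
  transport cross 0 p.1.1 p.1.2 * idem p.1.2

lemma pathUnit_eq_idem_mul (s : PermPairs (IsPath A Λ) m) :
    (pathUnit s : 𝓡) = idem s.1.1 * transport cross 0 s.1.1 s.1.2 :=
  transport_mul_idem [] s.2.2.2

lemma pathUnit_self {ν : List (Fin N)} (hν : IsPath A Λ ν ∧ ν.length = m) :
    (pathUnit ⟨(ν, ν), hν, hν, .rfl⟩ : 𝓡) = idem ν := by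
  rw [pathUnit, transport_self, one_mul]

section Minuscule

variable (hΛ : IsMinuscule A Λ) (hQ : QAdmissible k A d Q) (hd : ∀ i, d i ≠ 0)
include hΛ hQ hd

lemma isBraidFamily_cross : IsBraidFamily (cross : ℕ → 𝓡) where
  comm := cross_mul_cross_of_lt
  braid p := by
    rcases lt_or_ge (p + 2) m with hp | hp
    · refine eq_of_mul_idem_eq fun L hL => ?_
      obtain ⟨u, i, j, l, w, rfl, rfl⟩ := exists_eq_append_cons_cons_cons (hL ▸ hp)
      obtain rfl | hil := eq_or_ne i l
      · by_cases hA : A i j = 0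
        · have hnot : ¬IsPath A Λ (u ++ i :: j :: i :: w) := fun h =>
            hΛ.not_isPath_cons_cons_self i w (isPath_cons.1 (hΛ.isPath_swap hA h).of_append).1
          rw [idem_eq_zero_of_not_isPath hΛ hQ hd hnot, mul_zero, mul_zero]
        · have hr := cross_mul_idem_eq_zero (m := m) hΛ hQ hd (u := u ++ [i]) (w := w)
            (mt (hΛ.zero_symm j i) hA)
          rw [List.append_assoc, List.singleton_append, List.length_append,
            List.length_singleton] at hr
          rw [mul_assoc, hr, mul_zero, mul_assoc, cross_mul_idem_eq_zero hΛ hQ hd hA, mul_zero]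
      · exact braid_mul_idem_of_ne u hil j w
    · rw [cross_eq_zero (by omega : m ≤ p + 1 + 1)]
      simp only [mul_zero, zero_mul]

lemma cross_mul_transport_mul_idem (p u : List (Fin N)) {i j : Fin N} (hij : A i j = 0)
    (w : List (Fin N)) {ν : List (Fin N)} (h : (u ++ i :: j :: w).Perm ν) :
    (cross (p.length + u.length) *
        (transport cross p.length (u ++ i :: j :: w) ν * idem (p ++ ν)) : 𝓡) =
      transport cross p.length (u ++ j :: i :: w) ν * idem (p ++ ν) := by
  induction u generalizing p ν with
  | nil =>
    have hb := isBraidFamily_cross (m := m) hΛ hQ hd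
    have hne := hΛ.ne_of_zero hij
    have hi : i ∈ ν := h.subset (by simp)
    obtain hlt | hgt := Nat.lt_or_gt_of_ne (fun he : ν.idxOf i = ν.idxOf j =>
      hne ((List.idxOf_inj hi).1 he))
    · rw [← mul_assoc, List.nil_append, List.nil_append, List.length_nil, add_zero,
        hb.mul_transport_cons_cons _ _ hlt]
    · rw [List.nil_append, List.nil_append, List.length_nil, add_zero,
        ← hb.mul_transport_cons_cons _ _ hgt, mul_assoc,
        transport_mul_idem p ((List.Perm.swap i j w).trans h), ← mul_assoc, ← mul_assoc,
        mul_assoc (cross _) (cross _), cross_mul_cross_mul_idem_of_zero hQ hne.symm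
        (hΛ.zero_symm _ _ hij)]
  | cons c u ih =>
    obtain ⟨hc, herase⟩ := List.cons_perm_iff_perm_erase.1 h
    have hu := ih (p ++ [c]) herase
    simp only [List.length_append, List.length_singleton] at hu
    simp only [List.cons_append, transport, mul_assoc, slide_mul_idem p hc]
    rw [← mul_assoc (transport _ _ _ _), ← mul_assoc (transport _ _ _ _), ← hu, List.length_cons]
    simp only [mul_assoc, add_assoc, add_comm 1]

lemma cross_mul_pathUnit {u : List (Fin N)} {i j : Fin N} (hij : A i j = 0) {w ν : List (Fin N)}
    (hμ : IsPath A Λ (u ++ i :: j :: w) ∧ (u ++ i :: j :: w).length = m)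
    (hμ' : IsPath A Λ (u ++ j :: i :: w) ∧ (u ++ j :: i :: w).length = m)
    (hν : IsPath A Λ ν ∧ ν.length = m) (h : (u ++ i :: j :: w).Perm ν)
    (h' : (u ++ j :: i :: w).Perm ν) :
    (cross u.length * pathUnit ⟨(u ++ i :: j :: w, ν), hμ, hν, h⟩ : 𝓡) =
      pathUnit ⟨(u ++ j :: i :: w, ν), hμ', hν, h'⟩ := by
  simpa [pathUnit] using cross_mul_transport_mul_idem hΛ hQ hd [] u hij w h

lemma cross_mul_pathUnit_mem_span (p : ℕ) (s : PermPairs (IsPath A Λ) m) :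
    (cross p * pathUnit s : 𝓡) ∈ Submodule.span k (Set.range (pathUnit (A := A))) := by
  rcases lt_or_ge (p + 1) m with hp | hp
  · obtain ⟨⟨μ, ν⟩, hμ, hν, h⟩ := s
    dsimp only at hμ hν h
    obtain ⟨u, i, j, w, rfl, rfl⟩ := exists_eq_append_cons_cons (hμ.2 ▸ hp)
    by_cases hA : A i j = 0
    · have hμ' : IsPath A Λ (u ++ j :: i :: w) ∧ (u ++ j :: i :: w).length = m :=
        ⟨hΛ.isPath_swap hA hμ.1, by simpa using hμ.2⟩
      rw [cross_mul_pathUnit hΛ hQ hd hA hμ hμ' hν h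
        (((List.Perm.swap i j w).append_left u).trans h)]
      exact Submodule.subset_span ⟨_, rfl⟩
    · rw [pathUnit_eq_idem_mul, ← mul_assoc, cross_mul_idem_eq_zero hΛ hQ hd hA, zero_mul]
      exact Submodule.zero_mem _
  · rw [cross_eq_zero hp, zero_mul]
    exact Submodule.zero_mem _

theorem span_pathUnit :
    Submodule.span k (Set.range (pathUnit : PermPairs (IsPath A Λ) m → 𝓡)) = ⊤ := by
  have hmul {a : 𝓡} (h : ∀ s : PermPairs (IsPath A Λ) m,
      a * pathUnit s ∈ Submodule.span k (Set.range (pathUnit (A := A)))) :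
      Submodule.span k (Set.range pathUnit) ≤
        (Submodule.span k (Set.range (pathUnit (A := A)))).comap (LinearMap.mulLeft k a) :=
    Submodule.span_le.2 (Set.range_subset_iff.2 h)
  refine eq_top_of_generators_mul_mem ?_ (fun L => hmul fun s => ?_) (fun p => hmul fun s => ?_)
    fun p => hmul (cross_mul_pathUnit_mem_span hΛ hQ hd p)
  · rw [← sum_idem (Q := Q) (Λ := Λ)]
    refine Submodule.sum_mem _ fun ν _ => ?_
    by_cases hν : IsPath A Λ (List.ofFn ν)
    · rw [← pathUnit_self ⟨hν, List.length_ofFn⟩]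
      exact Submodule.subset_span ⟨_, rfl⟩
    · rw [idem_eq_zero_of_not_isPath hΛ hQ hd hν]
      exact Submodule.zero_mem _
  · by_cases hL : L = s.1.1
    · rw [pathUnit_eq_idem_mul, ← mul_assoc, hL, idem_mul_self, ← pathUnit_eq_idem_mul]
      exact Submodule.subset_span ⟨s, rfl⟩
    · rw [pathUnit_eq_idem_mul, ← mul_assoc, idem_mul_idem_of_ne hL, zero_mul]
      exact Submodule.zero_mem _
  · rw [dot_eq_zero_of_isMinuscule hΛ hQ hd, zero_mul]
    exact Submodule.zero_mem _

end Minuscule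
end CyclotomicQHA

/-! ### The representation on paths -/

section Sequences

variable {N m : ℕ}

lemma exists_eq_seqOf (ν : Fin m → Fin N) :
    ∃ (L : List (Fin N)) (h : L.length = m), ν = seqOf L h :=
  ⟨List.ofFn ν, List.length_ofFn, (seqOf_ofFn ν).symm⟩

lemma swapSeq_apply_left (j : ℕ) (h : j + 1 < m) (ν : Fin m → Fin N) :
    swapSeq j h ν ⟨j, by omega⟩ = ν ⟨j + 1, h⟩ :=
  congrArg ν (Equiv.swap_apply_left _ _)

lemma swapSeq_apply_right (j : ℕ) (h : j + 1 < m) (ν : Fin m → Fin N) :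
    swapSeq j h ν ⟨j + 1, h⟩ = ν ⟨j, by omega⟩ :=
  congrArg ν (Equiv.swap_apply_right _ _)

lemma swapSeq_apply_of_ne {j : ℕ} (h : j + 1 < m) (ν : Fin m → Fin N) {p : ℕ} (hp : p < m)
    (h0 : p ≠ j) (h1 : p ≠ j + 1) : swapSeq j h ν ⟨p, hp⟩ = ν ⟨p, hp⟩ :=
  congrArg ν (Equiv.swap_apply_of_ne_of_ne (by simpa using h0) (by simpa using h1))

lemma swapSeq_swapSeq (j : ℕ) (h : j + 1 < m) (ν : Fin m → Fin N) :
    swapSeq j h (swapSeq j h ν) = ν := by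
  funext p
  simp [swapSeq, posSwap]

lemma swapSeq_comm {a b : ℕ} (ha : a + 1 < m) (hb : b + 1 < m) (hab : a + 1 < b)
    (ν : Fin m → Fin N) : swapSeq a ha (swapSeq b hb ν) = swapSeq b hb (swapSeq a ha ν) := by
  funext p
  simp only [swapSeq, posSwap, Function.comp_apply, Equiv.swap_apply_def, Fin.ext_iff]
  grind

lemma swapSeq_braid {j : ℕ} (h : j + 1 < m) (h' : j + 1 + 1 < m) (ν : Fin m → Fin N) :
    swapSeq (j + 1) h' (swapSeq j h (swapSeq (j + 1) h' ν)) =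
      swapSeq j h (swapSeq (j + 1) h' (swapSeq j h ν)) := by
  funext p
  simp only [swapSeq, posSwap, Function.comp_apply, Equiv.swap_apply_def, Fin.ext_iff]
  grind

end Sequences

section PathSequences

variable {N m : ℕ} {A : Fin N → Fin N → ℤ} {Λ : Fin N → ℤ}

lemma apply_eq_one_of_isPath_ofFn {ν : Fin m → Fin N} (hν : IsPath A Λ (List.ofFn ν)) {p : Fin m}
    (hp : (p : ℕ) + 1 = m) : Λ (ν p) = 1 := by
  obtain ⟨L, hL, rfl⟩ := exists_eq_seqOf ν
  rw [ofFn_seqOf] at hν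
  obtain ⟨u, i, rfl⟩ : ∃ u i, L = u ++ [i] :=
    ⟨_, _, (List.dropLast_append_getLast (List.ne_nil_of_length_pos (by omega))).symm⟩
  rw [seqOf_append_cons _ _ _ _ p (by simp at hL; omega)]
  simpa [pathWeight_nil] using (isPath_cons.1 hν.of_append).2

namespace IsMinuscule

variable (hΛ : IsMinuscule A Λ)
include hΛ

lemma isPath_ofFn_swapSeq {j : ℕ} (h : j + 1 < m) {ν : Fin m → Fin N}
    (hA : A (ν ⟨j, by omega⟩) (ν ⟨j + 1, h⟩) = 0) (hν : IsPath A Λ (List.ofFn ν)) :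
    IsPath A Λ (List.ofFn (swapSeq j h ν)) := by
  obtain ⟨L, hL, rfl⟩ := exists_eq_seqOf ν
  obtain ⟨u, a, b, w, rfl, rfl⟩ := exists_eq_append_cons_cons (p := j) (by omega : j + 1 < L.length)
  rw [seqOf_append_cons _ _ _ _ _ rfl, seqOf_append_cons_cons _ _ _ _ _ _ rfl] at hA
  rw [ofFn_seqOf] at hν
  rw [swapSeq_seqOf _ _ _ _ h hL (by simpa using hL), ofFn_seqOf]
  exact hΛ.isPath_swap hA hν

lemma apply_ne_apply_succ {j : ℕ} (h : j + 1 < m) {ν : Fin m → Fin N}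
    (hν : IsPath A Λ (List.ofFn ν)) : ν ⟨j, by omega⟩ ≠ ν ⟨j + 1, h⟩ := by
  obtain ⟨L, hL, rfl⟩ := exists_eq_seqOf ν
  obtain ⟨u, a, b, w, rfl, rfl⟩ := exists_eq_append_cons_cons (p := j) (by omega : j + 1 < L.length)
  rw [seqOf_append_cons _ _ _ _ _ rfl, seqOf_append_cons_cons _ _ _ _ _ _ rfl]
  rw [ofFn_seqOf] at hν
  rintro rfl
  exact hΛ.not_isPath_cons_cons_self _ _ hν.of_append

lemma eq_neg_two_of_apply_eq {j : ℕ} (h : j + 2 < m) {ν : Fin m → Fin N}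
    (hν : IsPath A Λ (List.ofFn ν)) (hv : ν ⟨j, by omega⟩ = ν ⟨j + 2, h⟩) :
    A (ν ⟨j, by omega⟩) (ν ⟨j + 1, by omega⟩) = -2 := by
  obtain ⟨L, hL, rfl⟩ := exists_eq_seqOf ν
  obtain ⟨u, a, b, c, w, rfl, rfl⟩ :=
    exists_eq_append_cons_cons_cons (p := j) (by omega : j + 2 < L.length)
  rw [seqOf_append_cons _ _ _ _ _ rfl, seqOf_append_cons_cons_cons _ _ _ _ _ _ _ rfl] at hv
  subst hv
  rw [seqOf_append_cons _ _ _ _ _ rfl, seqOf_append_cons_cons _ _ _ _ _ _ rfl]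
  rw [ofFn_seqOf] at hν
  obtain ⟨hν', ha⟩ := isPath_cons.1 hν.of_append
  have ha' := (isPath_cons.1 (isPath_cons.1 hν').1).2
  rw [pathWeight_cons_apply, pathWeight_cons_apply, ha', hΛ.diag] at ha
  omega

end IsMinuscule

end PathSequences

section PathModule

variable {k : Type} [Field k] {N m : ℕ} {A : Fin N → Fin N → ℤ} {Λ : Fin N → ℤ}

/-- The free module on the paths of length `m`. -/
abbrev PathModule (k : Type) [Field k] (A : Fin N → Fin N → ℤ) (Λ : Fin N → ℤ) (m : ℕ) : Type :=
  {ν : Fin m → Fin N // IsPath A Λ (List.ofFn ν)} →₀ k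

/-- The basis vector of a path, extended by `0` to all sequences. -/
noncomputable def pathVec (ν : Fin m → Fin N) : PathModule k A Λ m :=
  if h : IsPath A Λ (List.ofFn ν) then Finsupp.single ⟨ν, h⟩ 1 else 0

/-- The operator by which the idempotent of `ν` acts on the path module. -/
noncomputable def pathProj (ν : Fin m → Fin N) : Module.End k (PathModule k A Λ m) :=
  Finsupp.linearCombination k fun μ => if μ = ν then pathVec μ else 0

/-- The operator by which the intertwiner of the strands `j` and `j + 1` acts on the path module:
it exchanges orthogonal letters and kills every other path. -/
noncomputable def pathSwap (j : ℕ) (h : j + 1 < m) : Module.End k (PathModule k A Λ m) :=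
  Finsupp.linearCombination k fun μ =>
    if A (μ.1 ⟨j, by omega⟩) (μ.1 ⟨j + 1, h⟩) = 0 then pathVec (swapSeq j h μ) else 0

lemma pathVec_of_isPath {ν : Fin m → Fin N} (h : IsPath A Λ (List.ofFn ν)) :
    (pathVec ν : PathModule k A Λ m) = Finsupp.single ⟨ν, h⟩ 1 :=
  dif_pos h

lemma pathVec_of_not_isPath {ν : Fin m → Fin N} (h : ¬IsPath A Λ (List.ofFn ν)) :
    (pathVec ν : PathModule k A Λ m) = 0 :=
  dif_neg h

lemma pathVec_apply (ν : Fin m → Fin N) (μ : {ν : Fin m → Fin N // IsPath A Λ (List.ofFn ν)}) :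
    (pathVec ν : PathModule k A Λ m) μ = if ν = μ then 1 else 0 := by
  by_cases hν : IsPath A Λ (List.ofFn ν)
  · simp [pathVec_of_isPath hν, Finsupp.single_apply, Subtype.ext_iff]
  · rw [pathVec_of_not_isPath hν, if_neg (by rintro rfl; exact hν μ.2), Finsupp.zero_apply]

lemma pathModule_hom_ext {X Y : Module.End k (PathModule k A Λ m)}
    (h : ∀ ν, IsPath A Λ (List.ofFn ν) → X (pathVec ν) = Y (pathVec ν)) : X = Y := by
  refine Finsupp.lhom_ext' fun ν => LinearMap.ext_ring ?_
  simpa [pathVec_of_isPath ν.2] using h ν ν.2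

lemma pathProj_pathVec (ν μ : Fin m → Fin N) :
    pathProj ν (pathVec μ : PathModule k A Λ m) = if μ = ν then pathVec μ else 0 := by
  by_cases hμ : IsPath A Λ (List.ofFn μ)
  · rw [pathVec_of_isPath hμ, pathProj, Finsupp.linearCombination_single, one_smul,
      pathVec_of_isPath hμ]
  · simp [pathVec_of_not_isPath hμ]

lemma mul_pathProj_eq {X Y : Module.End k (PathModule k A Λ m)} {ν : Fin m → Fin N}
    (h : IsPath A Λ (List.ofFn ν) → X (pathVec ν) = Y (pathVec ν)) :
    X * pathProj ν = Y * pathProj ν := by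
  refine pathModule_hom_ext fun μ hμ => ?_
  rw [Module.End.mul_apply, Module.End.mul_apply, pathProj_pathVec]
  split_ifs with hμν
  · subst hμν
    exact h hμ
  · rw [map_zero, map_zero]

lemma pathProj_mul_pathProj_of_ne {ν ν' : Fin m → Fin N} (hne : ν ≠ ν') :
    (pathProj ν * pathProj ν' : Module.End k (PathModule k A Λ m)) = 0 := by
  rw [← zero_mul (pathProj ν')]
  refine mul_pathProj_eq fun _ => ?_
  rw [pathProj_pathVec, if_neg hne.symm, LinearMap.zero_apply]

lemma pathProj_mul_self (ν : Fin m → Fin N) :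
    (pathProj ν * pathProj ν : Module.End k (PathModule k A Λ m)) = pathProj ν := by
  conv_rhs => rw [← one_mul (pathProj ν)]
  refine mul_pathProj_eq fun _ => ?_
  rw [pathProj_pathVec, if_pos rfl, Module.End.one_apply]

lemma sum_pathProj : ∑ ν, (pathProj ν : Module.End k (PathModule k A Λ m)) = 1 := by
  refine pathModule_hom_ext fun μ _ => ?_
  simp [LinearMap.sum_apply, pathProj_pathVec]

lemma pathProj_eq_zero {ν : Fin m → Fin N} (hν : ¬IsPath A Λ (List.ofFn ν)) :
    (pathProj ν : Module.End k (PathModule k A Λ m)) = 0 := by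
  rw [← one_mul (pathProj ν), ← zero_mul (pathProj ν)]
  exact mul_pathProj_eq fun h => absurd h hν

end PathModule

namespace IsMinuscule

variable {k : Type} [Field k] {N m : ℕ} {A : Fin N → Fin N → ℤ} {Λ : Fin N → ℤ}
  (hΛ : IsMinuscule A Λ)

local notation "𝓔" => Module.End k (PathModule k A Λ m)

include hΛ

lemma pathProj_eq_zero_of_apply_eq {j : ℕ} (h : j + 1 < m) {ν : Fin m → Fin N}
    (hv : ν ⟨j, by omega⟩ = ν ⟨j + 1, h⟩) : (pathProj ν : 𝓔) = 0 :=
  pathProj_eq_zero fun hν => hΛ.apply_ne_apply_succ h hν hv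

lemma pathSwap_pathVec (j : ℕ) (h : j + 1 < m) (μ : Fin m → Fin N) :
    pathSwap j h (pathVec μ : PathModule k A Λ m) =
      if A (μ ⟨j, by omega⟩) (μ ⟨j + 1, h⟩) = 0 then pathVec (swapSeq j h μ) else 0 := by
  by_cases hμ : IsPath A Λ (List.ofFn μ)
  · rw [pathVec_of_isPath hμ, pathSwap, Finsupp.linearCombination_single, one_smul]
  · rw [pathVec_of_not_isPath hμ, map_zero]
    split_ifs with hA
    · rw [pathVec_of_not_isPath]
      intro hμ'
      apply hμ
      rw [← swapSeq_swapSeq j h μ]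
      refine hΛ.isPath_ofFn_swapSeq h ?_ hμ'
      rw [swapSeq_apply_left, swapSeq_apply_right]
      exact hΛ.zero_symm _ _ hA
    · rfl

lemma pathSwap_mul_pathProj (j : ℕ) (h : j + 1 < m) (ν : Fin m → Fin N) :
    (pathSwap j h * pathProj ν : 𝓔) = pathProj (swapSeq j h ν) * pathSwap j h := by
  refine pathModule_hom_ext fun μ _ => ?_
  have hinj : swapSeq j h μ = swapSeq j h ν ↔ μ = ν :=
    (Function.LeftInverse.injective (swapSeq_swapSeq j h)).eq_iff
  rw [Module.End.mul_apply, Module.End.mul_apply, pathProj_pathVec, hΛ.pathSwap_pathVec,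
    apply_ite (pathSwap j h), apply_ite (pathProj _), pathProj_pathVec, hΛ.pathSwap_pathVec,
    map_zero, map_zero]
  simp only [hinj]
  split_ifs <;> rfl

lemma pathSwap_comm {a b : ℕ} (ha : a + 1 < m) (hb : b + 1 < m) (hab : a + 1 < b) :
    (pathSwap a ha * pathSwap b hb : 𝓔) = pathSwap b hb * pathSwap a ha := by
  refine pathModule_hom_ext fun μ _ => ?_
  rw [Module.End.mul_apply, Module.End.mul_apply, hΛ.pathSwap_pathVec, hΛ.pathSwap_pathVec,
    apply_ite (pathSwap a ha), apply_ite (pathSwap b hb), hΛ.pathSwap_pathVec,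
    hΛ.pathSwap_pathVec, map_zero, map_zero, swapSeq_comm ha hb hab]
  rw [swapSeq_apply_of_ne _ _ _ (by omega) (by omega),
    swapSeq_apply_of_ne _ _ _ (by omega) (by omega),
    swapSeq_apply_of_ne _ _ _ (by omega) (by omega),
    swapSeq_apply_of_ne _ _ _ (by omega) (by omega)]
  split_ifs <;> rfl

lemma pathSwap_braid {j : ℕ} (h : j + 1 < m) (h' : j + 1 + 1 < m) :
    (pathSwap (j + 1) h' * pathSwap j h * pathSwap (j + 1) h' : 𝓔) =
      pathSwap j h * pathSwap (j + 1) h' * pathSwap j h := by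
  refine pathModule_hom_ext fun μ _ => ?_
  have hfix (ν : Fin m → Fin N) : swapSeq j h ν ⟨j + 1 + 1, h'⟩ = ν ⟨j + 1 + 1, h'⟩ :=
    swapSeq_apply_of_ne h ν h' (by omega) (by omega)
  have hfix' (ν : Fin m → Fin N) : swapSeq (j + 1) h' ν ⟨j, by omega⟩ = ν ⟨j, by omega⟩ :=
    swapSeq_apply_of_ne h' ν _ (by omega) (by omega)
  simp only [Module.End.mul_apply, hΛ.pathSwap_pathVec, apply_ite (pathSwap j h),
    apply_ite (pathSwap (j + 1) h'), map_zero, hfix, hfix', swapSeq_apply_left, swapSeq_apply_right,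
    swapSeq_braid]
  split_ifs <;> rfl

lemma pathSwap_mul_self_mul_pathProj {d : Fin N → ℤ} {Q : Fin N → Fin N → MvPolynomial (Fin 2) k}
    (hQ : QAdmissible k A d Q) (hd : ∀ i, d i ≠ 0) (j : ℕ) (h : j + 1 < m) (ν : Fin m → Fin N) :
    (pathSwap j h * pathSwap j h * pathProj ν : 𝓔) =
      eval2 k (Q (ν ⟨j, by omega⟩) (ν ⟨j + 1, h⟩)) 0 0 * pathProj ν := by
  by_cases hij : ν ⟨j, by omega⟩ = ν ⟨j + 1, h⟩
  · rw [hΛ.pathProj_eq_zero_of_apply_eq h hij, mul_zero, mul_zero]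
  by_cases hA : A (ν ⟨j, by omega⟩) (ν ⟨j + 1, h⟩) = 0
  · rw [hQ.eq_one hij hA, eval2_one]
    refine mul_pathProj_eq fun _ => ?_
    rw [Module.End.mul_apply, hΛ.pathSwap_pathVec, if_pos hA, hΛ.pathSwap_pathVec,
      swapSeq_apply_left, swapSeq_apply_right, if_pos (hΛ.zero_symm _ _ hA), swapSeq_swapSeq,
      Module.End.one_apply]
  · have hneg := hΛ.neg_of_adjacent hij hA
    rw [eval2_mul_of_mul_eq_zero (fun _ => hQ.eq_of_coeff_ne_zero (hd _) hij) _ (zero_mul _),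
      zero_pow (by omega), zero_mul, smul_zero, ← zero_mul (pathProj ν)]
    refine mul_pathProj_eq fun _ => ?_
    rw [Module.End.mul_apply, hΛ.pathSwap_pathVec, if_neg hA, map_zero, LinearMap.zero_apply]

lemma eval3_Qbar_mul_pathProj {d : Fin N → ℤ} {Q : Fin N → Fin N → MvPolynomial (Fin 2) k}
    (hQ : QAdmissible k A d Q) (hd : ∀ i, d i ≠ 0) {j : ℕ} (h : j + 2 < m) {ν : Fin m → Fin N}
    (hv : ν ⟨j, by omega⟩ = ν ⟨j + 2, h⟩) :
    eval3 k (Qbar k (Q (ν ⟨j, by omega⟩) (ν ⟨j + 1, by omega⟩))) 0 0 0 *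
      (pathProj ν : 𝓔) = 0 := by
  by_cases hν : IsPath A Λ (List.ofFn ν)
  · have hA := hΛ.eq_neg_two_of_apply_eq h hν hv
    have hcoeff (b : ℕ) (hb : MvPolynomial.coeff (Finsupp.single 0 b)
        (Qbar k (Q (ν ⟨j, by omega⟩) (ν ⟨j + 1, by omega⟩))) ≠ 0) : b = 1 := by
      rw [coeff_single_Qbar] at hb
      have := hQ.eq_of_coeff_ne_zero (hd _) (hΛ.apply_ne_apply_succ _ hν) hb
      rw [hA] at this
      omega
    rw [eval3_mul_of_mul_eq_zero hcoeff _ (zero_mul _) (zero_mul _), pow_one, zero_mul, smul_zero]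
  · rw [pathProj_eq_zero hν, mul_zero]

end IsMinuscule

namespace CyclotomicQHA

variable {k : Type} [Field k] {N m : ℕ} {A : Fin N → Fin N → ℤ} {Λ d : Fin N → ℤ}
  {Q : Fin N → Fin N → MvPolynomial (Fin 2) k}

local notation "𝓡" => CyclotomicQHA k Q Λ m
local notation "𝓔" => Module.End k (PathModule k A Λ m)

/-- The action of the free algebra on the path module. -/
noncomputable def freePathRep : FA k N m →ₐ[k] 𝓔 :=
  FreeAlgebra.lift k fun
    | .e ν => pathProj ν
    | .x _ => 0
    | .t j h => pathSwap j h

lemma freePathRep_Eg (ν : Fin m → Fin N) :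
    freePathRep (Eg k ν) = (pathProj ν : 𝓔) := by
  simp [freePathRep, Eg]

lemma freePathRep_Xg (p : Fin m) :
    freePathRep (Xg k p) = (0 : 𝓔) := by
  simp [freePathRep, Xg]

lemma freePathRep_Tg (j : ℕ) (h : j + 1 < m) :
    freePathRep (Tg k j h) = (pathSwap j h : 𝓔) := by
  simp [freePathRep, Tg]

lemma freePathRep_eq_of_cycRel {a b : FA k N m} (hab : CycRel k Λ Set.univ a b) :
    (freePathRep a : 𝓔) = freePathRep b := by
  obtain ⟨ν, -, p, hp⟩ := hab
  simp only [map_mul, map_pow, freePathRep_Eg, freePathRep_Xg, map_zero]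
  by_cases hν : IsPath A Λ (List.ofFn ν)
  · rw [apply_eq_one_of_isPath_ofFn hν hp, Int.toNat_one, pow_one, zero_mul]
  · rw [pathProj_eq_zero hν, mul_zero]

section Minuscule

variable (hΛ : IsMinuscule A Λ) (hQ : QAdmissible k A d Q) (hd : ∀ i, d i ≠ 0)
include hΛ hQ hd

lemma freePathRep_eq_of_rel {a b : FA k N m} (hab : Rel k Q Set.univ a b) :
    (freePathRep a : 𝓔) = freePathRep b := by
  cases hab <;>
    simp only [map_mul, map_add, map_sub, map_sum, map_one, map_zero, freePathRep_Eg,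
      freePathRep_Xg, freePathRep_Tg, mul_zero, zero_mul, zero_add]
  case e_orth ν ν' hne => exact pathProj_mul_pathProj_of_ne hne
  case e_idem ν => exact pathProj_mul_self ν
  case e_sum => exact sum_pathProj
  case e_out ν hν => exact absurd (Set.mem_univ ν) hν
  case te j h ν => exact hΛ.pathSwap_mul_pathProj j h ν
  case tt a ha b hb hab =>
    exact hab.elim (hΛ.pathSwap_comm ha hb) fun hba => (hΛ.pathSwap_comm hb ha hba).symm
  case tsq j h ν =>
    rw [map_eval2 (S := 𝓔), freePathRep_Xg, freePathRep_Xg]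
    exact hΛ.pathSwap_mul_self_mul_pathProj hQ hd j h ν
  case tx_left j h ν hv => rw [hΛ.pathProj_eq_zero_of_apply_eq h hv, sub_zero (G := 𝓔)]
  case tx_right j h ν hv => rw [hΛ.pathProj_eq_zero_of_apply_eq h hv]
  case braid_ne j h h' ν hv => rw [hΛ.pathSwap_braid h h']
  case braid_eq j h h' ν hv =>
    rw [hΛ.pathSwap_braid h h', map_eval3 (S := 𝓔), freePathRep_Xg, freePathRep_Xg,
      freePathRep_Xg, hΛ.eval3_Qbar_mul_pathProj hQ hd h' hv, add_zero]

/-- The action of the cyclotomic quiver Hecke algebra on the path module. -/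
noncomputable def pathRep : 𝓡 →ₐ[k] 𝓔 :=
  RingQuot.liftAlgHom k ⟨freePathRep, fun _ _ hab =>
    hab.elim (freePathRep_eq_of_rel hΛ hQ hd) freePathRep_eq_of_cycRel⟩

lemma pathRep_mk (a : FA k N m) : pathRep hΛ hQ hd (mk a) = freePathRep a :=
  RingQuot.liftAlgHom_mkAlgHom_apply _ _ _ _

lemma pathRep_idem {L : List (Fin N)} (h : L.length = m) :
    pathRep hΛ hQ hd (idem L) = pathProj (seqOf L h) := by
  rw [idem_eq_mk h, pathRep_mk, freePathRep_Eg]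

lemma pathRep_cross {j : ℕ} (h : j + 1 < m) :
    pathRep hΛ hQ hd (cross j) = pathSwap j h := by
  rw [cross_eq_mk h, pathRep_mk, freePathRep_Tg]

lemma pathRep_pathUnit (s : PermPairs (IsPath A Λ) m) (κ : Fin m → Fin N) :
    pathRep hΛ hQ hd (pathUnit s) (pathVec κ) =
      if κ = seqOf s.1.2 s.2.2.1.2 then pathVec (seqOf s.1.1 s.2.1.2) else 0 := by
  obtain ⟨⟨μ, ν⟩, hμ, hν, h⟩ := s
  dsimp only at hμ hν h ⊢
  have hpath := hΛ.reflTransGen_of_perm hμ.1 hν.1 h.symm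
  induction hpath with
  | refl =>
    rw [pathUnit_self hν, pathRep_idem hΛ hQ hd hν.2, pathProj_pathVec]
    split_ifs with hκ
    · rw [hκ]
    · rfl
  | tail hpath hswap ih =>
    obtain ⟨u, i, j, w, hij⟩ := hswap
    have hμ' := hΛ.isPath_of_reflTransGen hpath hν.1
    have hlen : (u ++ i :: j :: w).length = m := by simpa using hμ.2
    have h' : (u ++ i :: j :: w).Perm ν := ((List.Perm.swap j i w).append_left u).trans h
    have hj : u.length + 1 < m := by simp at hlen; omega
    rw [← cross_mul_pathUnit hΛ hQ hd hij ⟨hμ', hlen⟩ hμ hν h' h, map_mul, Module.End.mul_apply,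
      ih ⟨hμ', hlen⟩ h', pathRep_cross hΛ hQ hd hj, apply_ite (pathSwap _ _), map_zero,
      hΛ.pathSwap_pathVec, seqOf_append_cons _ _ _ _ _ rfl,
      seqOf_append_cons_cons _ _ _ _ _ _ rfl, if_pos hij, swapSeq_seqOf _ _ _ _ hj hlen hμ.2]

lemma linearIndependent_pathUnit :
    LinearIndependent k (pathUnit : PermPairs (IsPath A Λ) m → 𝓡) := by
  have hpath (s : PermPairs (IsPath A Λ) m) :
      IsPath A Λ (List.ofFn (seqOf s.1.1 s.2.1.2)) := by
    rw [ofFn_seqOf]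
    exact s.2.1.1
  have hseq {L L' : List (Fin N)} (h : L.length = m) (h' : L'.length = m)
      (he : seqOf L h = seqOf L' h') : L = L' := by
    rw [← ofFn_seqOf L h, he, ofFn_seqOf]
  refine LinearIndependent.of_pairwise_dual_eq_zero_one _
    (fun s => Finsupp.lapply ⟨seqOf s.1.1 s.2.1.2, hpath s⟩ ∘ₗ
      LinearMap.applyₗ (pathVec (seqOf s.1.2 s.2.2.1.2)) ∘ₗ (pathRep hΛ hQ hd).toLinearMap)
    (fun s t hst => ?_) fun s => ?_
  · change pathRep hΛ hQ hd (pathUnit t) _ _ = 0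
    rw [pathRep_pathUnit]
    split_ifs with h2
    · rw [pathVec_apply, if_neg]
      exact fun h1 => hst (Subtype.ext (Prod.ext
        (hseq t.2.1.2 s.2.1.2 h1).symm (hseq s.2.2.1.2 t.2.2.1.2 h2)))
    · rfl
  · change pathRep hΛ hQ hd (pathUnit s) _ _ = 1
    rw [pathRep_pathUnit, if_pos rfl, pathVec_apply, if_pos rfl]

theorem finrank_eq_card_permPairs :
    Module.finrank k 𝓡 = Nat.card (PermPairs (IsPath A Λ) m) :=
  Module.finrank_eq_nat_card_basis
    (.mk (linearIndependent_pathUnit hΛ hQ hd) (span_pathUnit hΛ hQ hd).ge)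

end Minuscule

end CyclotomicQHA

/-! ### Shifted tableaux and residue words -/

section ShiftedTableaux

variable {n m : ℕ} {w : List ℕ}

/-- The residue words of the standard tableaux of shifted shape with parts at most `n`. The letter
of a box is its residue, its distance to the main diagonal; the largest entry comes first. -/
def IsResidueWord (n : ℕ) : List ℕ → Prop
  | [] => True
  | c :: w => IsResidueWord n w ∧ c < n ∧ w.count c = w.count (c + 1) ∧
      (c = 0 ∨ w.count (c - 1) = w.count c + 1)

namespace IsResidueWord

lemma of_append {u : List ℕ} (h : IsResidueWord n (u ++ w)) : IsResidueWord n w := by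
  induction u with
  | nil => exact h
  | cons a u ih => exact ih h.1

lemma lt_of_mem (h : IsResidueWord n w) : ∀ x ∈ w, x < n := by
  induction w with
  | nil => simp
  | cons a w ih => exact List.forall_mem_cons.2 ⟨h.2.1, ih h.1⟩

lemma count_eq_zero (h : IsResidueWord n w) {c : ℕ} (hc : n ≤ c) : w.count c = 0 :=
  List.count_eq_zero.2 fun hmem => (h.lt_of_mem c hmem).not_ge hc

lemma count_succ (h : IsResidueWord n w) (c : ℕ) :
    w.count (c + 1) ≤ w.count c ∧ w.count c ≤ w.count (c + 1) + 1 := by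
  induction w with
  | nil => simp
  | cons a w ih =>
    obtain ⟨hw, -, hnext, hprev⟩ := h
    have hc := ih hw
    obtain rfl | ha := eq_or_ne a c
    · simp
      omega
    · obtain rfl | ha' := eq_or_ne a (c + 1)
      · simp at hprev ⊢
        omega
      · simpa [ha, ha'] using hc

end IsResidueWord

lemma antitone_lipschitz {N : ℕ → ℕ} (hN : ∀ c, N (c + 1) ≤ N c ∧ N c ≤ N (c + 1) + 1)
    {c d : ℕ} (hcd : c ≤ d) : N d ≤ N c ∧ N c ≤ N d + (d - c) := by
  induction d, hcd using Nat.le_induction with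
  | base => simp
  | succ d hcd ih =>
    have := hN d
    omega

/-- The box filled by the head letter of a residue word; `(0, 0)` is a junk value. -/
def headBox : List ℕ → ℕ × ℕ
  | [] => (0, 0)
  | c :: w => (w.count c + 1, w.count c + 1 + c)

/-- The filling with residue word `w`, of length `m`. -/
def wordTableau (m : ℕ) (w : List ℕ) : Fin m → ℕ × ℕ := fun a => headBox (w.drop (m - 1 - a))

lemma exists_split (hw : w.length = m) (a : Fin m) :
    ∃ u c s, w = u ++ c :: s ∧ s.length = a ∧
      wordTableau m w a = (s.count c + 1, s.count c + 1 + c) := by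
  have ha : m - 1 - a < w.length := by omega
  refine ⟨w.take (m - 1 - a), w[m - 1 - a], w.drop (m - 1 - a + 1), ?_, ?_, ?_⟩
  · rw [← List.drop_eq_getElem_cons ha, List.take_append_drop]
  · rw [List.length_drop]
    omega
  · rw [wordTableau, List.drop_eq_getElem_cons ha, headBox]

lemma wordTableau_append_cons {u s : List ℕ} {c : ℕ} (hs : s.length < (u ++ c :: s).length) :
    wordTableau _ (u ++ c :: s) ⟨s.length, hs⟩ = (s.count c + 1, s.count c + 1 + c) := by
  simp [wordTableau, headBox]

lemma wordTableau_injOn : Set.InjOn (wordTableau m) {w | w.length = m} := by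
  intro u hu v hv huv
  rw [Set.mem_ofPred_eq] at hu hv
  refine List.ext_getElem (hu.trans hv.symm) fun i hiu hiv => ?_
  have hbox := congrFun huv ⟨m - 1 - i, by omega⟩
  have hi : m - 1 - (m - 1 - i) = i := by omega
  simp only [wordTableau, hi] at hbox
  rw [List.drop_eq_getElem_cons hiu, List.drop_eq_getElem_cons hiv] at hbox
  simp only [headBox, Prod.mk.injEq] at hbox
  omega

lemma exists_append_of_length_lt {u v s t : List ℕ} {c d : ℕ} (h : u ++ c :: s = v ++ d :: t)
    (hlt : s.length < t.length) : ∃ z, t = z ++ c :: s := by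
  have hs : c :: s <:+ v ++ d :: t := ⟨u, h⟩
  have ht : t <:+ v ++ d :: t := ⟨v ++ [d], by simp⟩
  obtain ⟨z, hz⟩ := List.suffix_of_suffix_length_le hs ht hlt
  exact ⟨z, hz.symm⟩

lemma exists_split_count {c r : ℕ} (hr : 1 ≤ r) (hrw : r ≤ w.count c) :
    ∃ u s, w = u ++ c :: s ∧ s.count c + 1 = r := by
  induction w with
  | nil =>
    simp at hrw
    omega
  | cons a w ih =>
    by_cases hr' : r ≤ w.count c
    · obtain ⟨u, s, rfl, hs⟩ := ih hr'
      exact ⟨a :: u, s, rfl, hs⟩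
    · obtain rfl | ha := eq_or_ne a c
      · rw [List.count_cons_self] at hrw
        exact ⟨[], w, rfl, by omega⟩
      · exact absurd (by simpa [ha] using hrw) hr'

lemma IsResidueWord.not_le_of_lt (h : IsResidueWord n w) (hw : w.length = m) {a b : Fin m}
    (hab : a < b) : ¬wordTableau m w b ≤ wordTableau m w a := by
  obtain ⟨u, c, s, rfl, hs, ha⟩ := exists_split hw a
  obtain ⟨v, d, t, hvt, ht, hb⟩ := exists_split hw b
  obtain ⟨z, hz⟩ := exists_append_of_length_lt hvt (by omega)
  have hres : IsResidueWord n t := by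
    rw [hvt] at h
    exact h.of_append.1
  have hcount : s.count c + 1 ≤ t.count c := by
    simp [hz]
  rw [ha, hb, Prod.mk_le_mk]
  rcases le_total c d with hcd | hcd
  · have := antitone_lipschitz (N := (t.count ·)) hres.count_succ hcd
    omega
  · have := antitone_lipschitz (N := (t.count ·)) hres.count_succ hcd
    omega

lemma countP_lt_eq_zero {a c : ℕ} {l : List ℕ} (hl : ∀ x ∈ l, a > x) (hc : a ≤ c + 1) :
    l.countP (c < ·) = 0 := by
  rw [List.countP_eq_zero]
  intro x hx
  have := hl x hx
  simp only [decide_eq_true_eq]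
  omega

lemma mem_diagram {l : List ℕ} (hl : l.IsChain (· > ·)) {r c : ℕ} :
    (r, r + c) ∈ diagram l ↔ 1 ≤ r ∧ r ≤ l.countP (c < ·) := by
  induction l generalizing r with
  | nil =>
    simp [diagram]
    omega
  | cons a l ih =>
    obtain ⟨hal, hl'⟩ := List.pairwise_cons.1 (List.isChain_iff_pairwise.1 hl)
    have hzero : ¬c < a → l.countP (c < ·) = 0 := fun h => countP_lt_eq_zero hal (by omega)
    rcases r with _ | _ | r
    · simp [diagram]
    · by_cases hca : c < a
      · simp [diagram, hca]
        omega
      · simp [diagram, hca, hzero hca]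
        omega
    · have hr := ih (List.isChain_iff_pairwise.2 hl') (r := r + 1)
      simp only [diagram, Set.mem_ofPred_eq] at hr ⊢
      by_cases hca : c < a
      · simp [hca] at hr ⊢
        omega
      · simp [hca, hzero hca] at hr ⊢
        omega

lemma countP_lt_succ {l : List ℕ} (hl : l.IsChain (· > ·)) (c : ℕ) :
    l.countP (c + 1 < ·) ≤ l.countP (c < ·) ∧ l.countP (c < ·) ≤ l.countP (c + 1 < ·) + 1 := by
  induction l with
  | nil => simp
  | cons a l ih =>
    obtain ⟨hal, hl'⟩ := List.pairwise_cons.1 (List.isChain_iff_pairwise.1 hl)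
    have hc := ih (List.isChain_iff_pairwise.2 hl')
    simp only [List.countP_cons, decide_eq_true_eq]
    by_cases ha : a ≤ c + 1
    · have := countP_lt_eq_zero hal ha
      split_ifs <;> omega
    · rw [if_pos (by omega), if_pos (by omega)]
      omega

lemma mem_diagram_of_le {l : List ℕ} (hl : l.IsChain (· > ·)) {r q s p : ℕ}
    (hrq : (r, q) ∈ diagram l) (hs : 1 ≤ s) (hsp : s ≤ p) (hle : (s, p) ≤ (r, q)) :
    (s, p) ∈ diagram l := by
  obtain ⟨c, rfl⟩ := Nat.exists_eq_add_of_le (show r ≤ q from hrq.2.2.1)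
  obtain ⟨d, rfl⟩ := Nat.exists_eq_add_of_le hsp
  rw [mem_diagram hl] at hrq ⊢
  rw [Prod.mk_le_mk] at hle
  rcases le_total c d with hcd | hcd
  · have := antitone_lipschitz (N := fun c => l.countP (c < ·)) (countP_lt_succ hl) hcd
    omega
  · have := antitone_lipschitz (N := fun c => l.countP (c < ·)) (countP_lt_succ hl) hcd
    omega

/-- The strict partition with parts at most `j` having `N c` parts larger than `c`; it exists when
`N` decreases to `0` in steps of at most one. -/
def strictPartition (N : ℕ → ℕ) : ℕ → List ℕ
  | 0 => []
  | j + 1 => if N j = N (j + 1) + 1 then (j + 1) :: strictPartition N j else strictPartition N j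

lemma pos_and_le_of_mem_strictPartition {N : ℕ → ℕ} {j x : ℕ} (hx : x ∈ strictPartition N j) :
    0 < x ∧ x ≤ j := by
  induction j with
  | zero => simp [strictPartition] at hx
  | succ j ih =>
    rw [strictPartition] at hx
    split_ifs at hx
    · rcases List.mem_cons.1 hx with rfl | hx
      · omega
      · have := ih hx
        omega
    · have := ih hx
      omega

lemma isChain_strictPartition (N : ℕ → ℕ) (j : ℕ) : (strictPartition N j).IsChain (· > ·) := by
  rw [List.isChain_iff_pairwise]
  induction j with
  | zero => simp [strictPartition]
  | succ j ih =>
    rw [strictPartition]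
    split_ifs
    · exact List.pairwise_cons.2
        ⟨fun x hx => Nat.lt_succ_of_le (pos_and_le_of_mem_strictPartition hx).2, ih⟩
    · exact ih

lemma countP_lt_strictPartition {N : ℕ → ℕ}
    (hN : ∀ c, N (c + 1) ≤ N c ∧ N c ≤ N (c + 1) + 1) (j c : ℕ) :
    (strictPartition N j).countP (c < ·) + N (max j c) = N c := by
  induction j with
  | zero => simp [strictPartition]
  | succ j ih =>
    have hj := hN j
    rw [strictPartition]
    rcases lt_or_ge c (j + 1) with hc | hc
    · rw [max_eq_left (by omega)] at ih ⊢
      split_ifs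
      · simp [hc]
        omega
      · omega
    · rw [max_eq_right (by omega)] at ih ⊢
      split_ifs
      · rw [List.countP_cons, if_neg (by simpa using hc)]
        omega
      · omega

lemma sum_eq_sum_countP {l : List ℕ} (h : ∀ x ∈ l, x ≤ n) :
    l.sum = ∑ c ∈ Finset.range n, l.countP (c < ·) := by
  induction l with
  | nil => simp
  | cons a l ih =>
    obtain ⟨ha, hl⟩ := List.forall_mem_cons.1 h
    have hfilter : (Finset.range n).filter (· < a) = Finset.range a := by
      ext c
      simp
      omega
    simp only [List.sum_cons, ih hl, List.countP_cons, decide_eq_true_eq, Finset.sum_add_distrib,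
      ← Finset.card_filter, hfilter, Finset.card_range]
    exact add_comm _ _

namespace IsResidueWord

/-- The shape of the tableau with residue word `w`. -/
abbrev shape (n : ℕ) (w : List ℕ) : List ℕ := strictPartition (w.count ·) n

variable (h : IsResidueWord n w)
include h

lemma countP_lt_shape (c : ℕ) : (shape n w).countP (c < ·) = w.count c := by
  simpa [h.count_eq_zero (le_max_left n c)] using
    countP_lt_strictPartition (N := (w.count ·)) h.count_succ n c

lemma sum_shape : (shape n w).sum = w.length := by
  rw [sum_eq_sum_countP fun x hx => (pos_and_le_of_mem_strictPartition hx).2]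
  simp only [h.countP_lt_shape]
  simpa using Multiset.sum_count_eq_card (s := Finset.range n) (m := (w : Multiset ℕ))
    (by simpa using h.lt_of_mem)

lemma range_wordTableau (hw : w.length = m) :
    Set.range (wordTableau m w) = diagram (shape n w) := by
  ext ⟨r, q⟩
  constructor
  · rintro ⟨a, ha⟩
    obtain ⟨u, c, s, hus, -, hbox⟩ := exists_split hw a
    rw [← ha, hbox, mem_diagram (isChain_strictPartition _ _), h.countP_lt_shape, hus]
    simp
  · intro hrq
    obtain ⟨c, rfl⟩ := Nat.exists_eq_add_of_le (show r ≤ q from hrq.2.2.1)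
    rw [mem_diagram (isChain_strictPartition _ _), h.countP_lt_shape] at hrq
    obtain ⟨u, s, rfl, rfl⟩ := exists_split_count hrq.1 hrq.2
    subst hw
    exact ⟨⟨s.length, by simp; omega⟩, wordTableau_append_cons _⟩

lemma isSYT (hw : w.length = m) : IsSYT (shape n w) m (wordTableau m w) := by
  have hlt {a b : Fin m} (hne : wordTableau m w a ≠ wordTableau m w b)
      (hle : wordTableau m w a ≤ wordTableau m w b) : a < b := by
    refine lt_of_not_ge fun hba => ?_
    obtain rfl | hba := hba.eq_or_lt
    · exact hne rfl
    · exact h.not_le_of_lt hw hba hle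
  refine ⟨fun a b hab => ?_, h.range_wordTableau hw, fun a b hrow hcol => ?_,
    fun a b hcol hrow => ?_⟩
  · by_contra hne
    rcases lt_or_gt_of_ne hne with hlt | hlt
    · exact h.not_le_of_lt hw hlt hab.ge
    · exact h.not_le_of_lt hw hlt hab.le
  · exact hlt (fun hab => hcol.ne (congrArg Prod.snd hab)) ⟨hrow.le, hcol.le⟩
  · exact hlt (fun hab => hrow.ne (congrArg Prod.fst hab)) ⟨hrow.le, hcol.le⟩

end IsResidueWord

lemma eq_of_forall_pos_le_iff {a b : ℕ} (h : ∀ s, 1 ≤ s → (s ≤ a ↔ s ≤ b)) : a = b := by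
  have := h a
  have := h b
  omega

/-- The residues of the boxes with the `t` smallest entries, the largest of these first. -/
def residueWord (f : Fin m → ℕ × ℕ) (t : ℕ) : List ℕ :=
  ((List.ofFn fun a => (f a).2 - (f a).1).take t).reverse

lemma length_residueWord (f : Fin m → ℕ × ℕ) : (residueWord f m).length = m := by
  simp [residueWord]

lemma residueWord_succ {f : Fin m → ℕ × ℕ} {t : Fin m} {r c : ℕ} (ht : f t = (r, r + c)) :
    residueWord f (t + 1) = c :: residueWord f t := by
  have hc : (f t).2 - (f t).1 = c := by simp [ht]
  rw [residueWord, List.take_succ_eq_append_getElem (by simp), List.reverse_append]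
  simp [residueWord, hc]

lemma drop_residueWord (f : Fin m → ℕ × ℕ) (a : Fin m) :
    (residueWord f m).drop (m - 1 - a) = residueWord f (a + 1) := by
  have ha : m - (m - 1 - a) = a + 1 := by omega
  simp [residueWord, List.drop_reverse, List.take_take, ha]

namespace IsSYT

variable {l : List ℕ} {f : Fin m → ℕ × ℕ}

lemma exists_eq_iff (hf : IsSYT l m f) (hl : l.IsChain (· > ·)) {r c : ℕ} :
    (∃ a, f a = (r, r + c)) ↔ 1 ≤ r ∧ r ≤ l.countP (c < ·) := by
  rw [← mem_diagram hl, ← hf.2.1, Set.mem_range]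

lemma exists_box (hf : IsSYT l m f) (a : Fin m) : ∃ r c, f a = (r, r + c) := by
  have ha : f a ∈ diagram l := hf.2.1 ▸ Set.mem_range_self a
  exact ⟨(f a).1, (f a).2 - (f a).1, Prod.ext rfl (Nat.add_sub_cancel' ha.2.2.1).symm⟩

lemma lt_of_lt (hf : IsSYT l m f) (hl : l.IsChain (· > ·)) {a b : Fin m} (hab : f a < f b) :
    a < b := by
  have hle := hab.le
  have ha : f a ∈ diagram l := hf.2.1 ▸ Set.mem_range_self a
  have hb : f b ∈ diagram l := hf.2.1 ▸ Set.mem_range_self b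
  have hcorner : ((f a).1, (f b).2) ∈ diagram l :=
    mem_diagram_of_le hl hb ha.2.1 (ha.2.2.1.trans hle.2) ⟨hle.1, le_rfl⟩
  obtain ⟨e, he⟩ := hf.2.1.symm ▸ hcorner
  have hae : a ≤ e := by
    rcases hle.2.eq_or_lt with h | h
    · exact (hf.1 (by rw [he, ← h])).le
    · exact (hf.2.2.1 a e (by rw [he]) (by rwa [he])).le
  have heb : e ≤ b := by
    rcases hle.1.eq_or_lt with h | h
    · exact (hf.1 (by rw [he, h])).le
    · exact (hf.2.2.2 e b (by rw [he]) (by rwa [he])).le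
  exact (hae.trans heb).lt_of_ne fun h => hab.ne (congrArg f h)

lemma exists_lt_iff (hf : IsSYT l m f) (hl : l.IsChain (· > ·)) {t : Fin m} {r c s d : ℕ}
    (ht : f t = (r, r + c)) (hdc : d ≤ c + 1) (hcd : c ≤ d + 1) (hs : 1 ≤ s) :
    (∃ a < t, f a = (s, s + d)) ↔ (s, s + d) < (r, r + c) := by
  constructor
  · rintro ⟨a, hat, ha⟩
    have hnle : ¬f t ≤ f a := fun hle => hle.eq_or_lt.elim
      (fun h => hat.ne' (hf.1 h)) fun h => hat.not_gt (hf.lt_of_lt hl h)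
    rw [ht, ha, Prod.mk_le_mk] at hnle
    rw [Prod.mk_lt_mk]
    omega
  · intro hlt
    have hmem : (r, r + c) ∈ diagram l := ht ▸ hf.2.1 ▸ Set.mem_range_self t
    obtain ⟨a, ha⟩ := hf.2.1.symm ▸ mem_diagram_of_le hl hmem hs (Nat.le_add_right s d) hlt.le
    exact ⟨a, hf.lt_of_lt hl (by rwa [ha, ht]), ha⟩

lemma exists_lt_succ_iff {t : Fin m} {p d r c : ℕ} (ht : f t = (p, p + d)) :
    (∃ a : Fin m, (a : ℕ) < t + 1 ∧ f a = (r, r + c)) ↔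
      (∃ a : Fin m, (a : ℕ) < t ∧ f a = (r, r + c)) ∨ p = r ∧ d = c := by
  have hpd : p = r ∧ d = c ↔ f t = (r, r + c) := by
    rw [ht, Prod.mk.injEq]
    omega
  rw [hpd]
  constructor
  · rintro ⟨a, hat, ha⟩
    obtain hat | hat := Nat.lt_succ_iff_lt_or_eq.1 hat
    · exact .inl ⟨a, hat, ha⟩
    · exact .inr (Fin.ext hat ▸ ha)
  · rintro (⟨a, hat, ha⟩ | ha)
    · exact ⟨a, Nat.lt_succ_of_lt hat, ha⟩
    · exact ⟨t, Nat.lt_succ_self _, ha⟩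

lemma le_count_residueWord_iff (hf : IsSYT l m f) (hl : l.IsChain (· > ·)) {t c r : ℕ}
    (ht : t ≤ m) (hr : 1 ≤ r) :
    r ≤ (residueWord f t).count c ↔ ∃ a : Fin m, (a : ℕ) < t ∧ f a = (r, r + c) := by
  induction t generalizing c r with
  | zero =>
    simp [residueWord]
    omega
  | succ t ih =>
    have ih {s d : ℕ} := @ih d s (Nat.le_of_succ_le ht)
    obtain ⟨p, d, hbox⟩ := hf.exists_box ⟨t, ht⟩
    have hp := ((hf.exists_eq_iff hl).1 ⟨_, hbox⟩).1
    have hcount : (residueWord f t).count d = p - 1 := by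
      refine eq_of_forall_pos_le_iff fun s hs => ?_
      refine ((ih hs).trans (hf.exists_lt_iff hl hbox d.le_succ d.le_succ hs)).trans ?_
      rw [Prod.mk_lt_mk]
      omega
    rw [exists_lt_succ_iff hbox, ← ih hr, residueWord_succ hbox]
    obtain rfl | hdc := eq_or_ne d c
    · rw [List.count_cons_self]
      change r ≤ (residueWord f t).count d + 1 ↔ _
      omega
    · simp [hdc]

lemma count_residueWord (hf : IsSYT l m f) (hl : l.IsChain (· > ·)) (c : ℕ) :
    (residueWord f m).count c = l.countP (c < ·) := by
  refine eq_of_forall_pos_le_iff fun r hr => ?_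
  rw [hf.le_count_residueWord_iff hl le_rfl hr]
  simpa [hr] using hf.exists_eq_iff hl (r := r) (c := c)

/-- The entry `t` occupies the first free place of its diagonal, in the same row as the first free
place of the next diagonal and just right of the last filled place of the previous one. -/
lemma count_residueWord_of_adjacent (hf : IsSYT l m f) (hl : l.IsChain (· > ·)) {t : Fin m}
    {r c d : ℕ} (ht : f t = (r, r + c)) (hdc : d ≤ c + 1) (hcd : c ≤ d + 1) :
    (residueWord f t).count d = if d < c then r else r - 1 := by
  refine eq_of_forall_pos_le_iff fun s hs => ?_
  refine ((hf.le_count_residueWord_iff hl t.2.le hs).trans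
    (hf.exists_lt_iff hl ht hdc hcd hs)).trans ?_
  rw [Prod.mk_lt_mk]
  split_ifs <;> omega

lemma isResidueWord_residueWord (hf : IsSYT l m f) (hl : l.IsChain (· > ·))
    (hn : ∀ x ∈ l, x ≤ n) {t : ℕ} (ht : t ≤ m) : IsResidueWord n (residueWord f t) := by
  induction t with
  | zero => simp [residueWord, IsResidueWord]
  | succ t ih =>
    obtain ⟨r, c, hbox⟩ := hf.exists_box ⟨t, ht⟩
    obtain ⟨hr, hrc⟩ := (hf.exists_eq_iff hl).1 ⟨_, hbox⟩
    have hcount {d : ℕ} := hf.count_residueWord_of_adjacent hl hbox (d := d)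
    rw [residueWord_succ hbox]
    refine ⟨ih (Nat.le_of_succ_le ht), ?_, ?_, ?_⟩
    · obtain ⟨x, hx, hcx⟩ := List.countP_pos_iff.1 (hr.trans hrc)
      exact (of_decide_eq_true hcx).trans_le (hn x hx)
    · rw [hcount c.le_succ c.le_succ, hcount le_rfl (by omega)]
      simp
    · rcases c with _ | c
      · exact .inl rfl
      · rw [hcount (by omega) (by omega), hcount (by omega) (by omega)]
        simp
        omega

lemma wordTableau_residueWord (hf : IsSYT l m f) (hl : l.IsChain (· > ·)) :
    wordTableau m (residueWord f m) = f := by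
  funext t
  obtain ⟨r, c, ht⟩ := hf.exists_box t
  have hr := ((hf.exists_eq_iff hl).1 ⟨_, ht⟩).1
  rw [wordTableau, drop_residueWord, residueWord_succ ht, headBox,
    hf.count_residueWord_of_adjacent hl ht c.le_succ c.le_succ, if_neg c.lt_irrefl,
    Nat.sub_add_cancel hr, ht]

end IsSYT

lemma IsResidueWord.isSYT_of_perm {u v : List ℕ} (hv : IsResidueWord n v) (hvm : v.length = m)
    (huv : u.Perm v) : IsSYT (shape n u) m (wordTableau m v) := by
  have hshape : shape n u = shape n v :=
    congrArg (strictPartition · n) (funext fun c => huv.count_eq c)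
  exact hshape ▸ hv.isSYT hvm

theorem card_permPairs_isResidueWord (n m : ℕ) :
    Nat.card (PermPairs (IsResidueWord n) m) = Nat.card (TabPairs n m) := by
  refine Nat.card_congr (Equiv.ofBijective (fun p => ⟨(wordTableau m p.1.1, wordTableau m p.1.2),
    IsResidueWord.shape n p.1.1, isChain_strictPartition _ _,
    fun x hx => pos_and_le_of_mem_strictPartition hx, p.2.1.1.sum_shape.trans p.2.1.2,
    p.2.1.1.isSYT p.2.1.2, p.2.2.1.1.isSYT_of_perm p.2.2.1.2 p.2.2.2⟩) ⟨?_, ?_⟩)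
  · rintro ⟨p, hu, hv, hp⟩ ⟨p', hu', hv', hp'⟩ h
    obtain ⟨huu', hvv'⟩ := Prod.mk.inj (congrArg Subtype.val h)
    exact Subtype.ext (Prod.ext (wordTableau_injOn hu.2 hu'.2 huu')
      (wordTableau_injOn hv.2 hv'.2 hvv'))
  · rintro ⟨⟨f, g⟩, l, hl, hn, -, hf, hg⟩
    have hle x (hx : x ∈ l) := (hn x hx).2
    refine ⟨⟨(residueWord f m, residueWord g m),
      ⟨hf.isResidueWord_residueWord hl hle le_rfl, length_residueWord f⟩,
      ⟨hg.isResidueWord_residueWord hl hle le_rfl, length_residueWord g⟩,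
      List.perm_iff_count.2 fun c => ?_⟩, ?_⟩
    · rw [hf.count_residueWord hl, hg.count_residueWord hl]
    · exact Subtype.ext
        (Prod.ext (hf.wordTableau_residueWord hl) (hg.wordTableau_residueWord hl))

end ShiftedTableaux

/-! ### The spin weights of types `B` and `D` -/

section Spin

variable {n m : ℕ}

lemma card_permPairs_eq_of_bijOn {α β : Type*} {P : List α → Prop} {R : List β → Prop} {π : α → β}
    (hbij : Set.BijOn (List.map π) {w | P w} {v | R v})
    (hperm : ∀ u v, P u → P v → (u.map π).Perm (v.map π) → u.Perm v) :
    Nat.card (PermPairs P m) = Nat.card (PermPairs R m) := by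
  refine Nat.card_congr (Equiv.ofBijective (fun p => ⟨(p.1.1.map π, p.1.2.map π),
    ⟨hbij.mapsTo p.2.1.1, by simpa using p.2.1.2⟩,
    ⟨hbij.mapsTo p.2.2.1.1, by simpa using p.2.2.1.2⟩, p.2.2.2.map π⟩) ⟨?_, ?_⟩)
  · rintro ⟨p, hu, hv, hp⟩ ⟨p', hu', hv', hp'⟩ h
    obtain ⟨huu', hvv'⟩ := Prod.mk.inj (congrArg Subtype.val h)
    exact Subtype.ext (Prod.ext (hbij.injOn hu.1 hu'.1 huu') (hbij.injOn hv.1 hv'.1 hvv'))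
  · rintro ⟨⟨u, v⟩, ⟨hu, hum⟩, ⟨hv, hvm⟩, huv⟩
    obtain ⟨u, hu', rfl⟩ := hbij.surjOn hu
    obtain ⟨v, hv', rfl⟩ := hbij.surjOn hv
    exact ⟨⟨(u, v), ⟨hu', by simpa using hum⟩, ⟨hv', by simpa using hvm⟩, hperm u v hu' hv' huv⟩,
      rfl⟩

lemma bijOn_map_of_cons {α β : Type*} {P : List α → Prop} {R : List β → Prop} {π : α → β}
    (hP_nil : P []) (hR_nil : R []) (hP_cons : ∀ a u, P (a :: u) → P u)
    (hR_cons : ∀ b v, R (b :: v) → R v)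
    (hbij : ∀ u, P u → Set.BijOn π {a | P (a :: u)} {b | R (b :: u.map π)}) :
    Set.BijOn (List.map π) {u | P u} {v | R v} := by
  refine ⟨fun u hu => ?_, fun u hu v hv huv => ?_, fun v hv => ?_⟩
  · cases u with
    | nil => exact hR_nil
    | cons a u => exact (hbij u (hP_cons a u hu)).mapsTo hu
  · induction u generalizing v with
    | nil => exact (List.map_eq_nil_iff.1 huv.symm).symm
    | cons a u ih =>
      obtain ⟨b, v, rfl, hab, huv⟩ := List.map_eq_cons_iff.1 huv.symm
      obtain rfl := ih (hP_cons a u hu) v (hP_cons b v hv) huv.symm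
      rw [(hbij u (hP_cons a u hu)).injOn hu hv hab.symm]
  · induction v with
    | nil => exact ⟨[], hP_nil, rfl⟩
    | cons b v ih =>
      obtain ⟨u, hu, rfl⟩ := ih (hR_cons b v hv)
      obtain ⟨a, ha, rfl⟩ := (hbij u hu).surjOn hv
      exact ⟨a :: u, ha, rfl⟩

lemma count_val_cons (j : Fin n) (w : List (Fin n)) (c : ℕ) :
    (((j :: w).map Fin.val).count c : ℤ) =
      (w.map Fin.val).count c + if (j : ℕ) = c then 1 else 0 := by
  simp [List.count_cons]

lemma pathWeight_AB_zero (hn : 0 < n) (w : List (Fin n)) :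
    pathWeight (AB n) (Pi.single ⟨0, hn⟩ 1) w ⟨0, hn⟩ =
      1 - 2 * (w.map Fin.val).count 0 + 2 * (w.map Fin.val).count 1 := by
  induction w with
  | nil => simp [pathWeight_nil]
  | cons j w ih =>
    simp only [pathWeight_cons_apply, ih, count_val_cons, AB, Fin.ext_iff]
    grind

lemma pathWeight_AB_succ (hn : 0 < n) (w : List (Fin n)) {c : ℕ} (hc : c + 1 < n) :
    pathWeight (AB n) (Pi.single ⟨0, hn⟩ 1) w ⟨c + 1, hc⟩ = (w.map Fin.val).count c -
      2 * (w.map Fin.val).count (c + 1) + (w.map Fin.val).count (c + 1 + 1) := by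
  induction w with
  | nil => simp [pathWeight_nil]
  | cons j w ih =>
    simp only [pathWeight_cons_apply, ih, count_val_cons, AB, Fin.ext_iff]
    grind

lemma isPath_AB_iff (hn : 0 < n) {w : List (Fin n)} :
    IsPath (AB n) (Pi.single ⟨0, hn⟩ 1) w ↔ IsResidueWord n (w.map Fin.val) := by
  induction w with
  | nil => simp [isPath_nil, IsResidueWord]
  | cons j w ih =>
    rw [isPath_cons, List.map_cons, IsResidueWord, ih]
    refine and_congr_right fun h => ?_
    obtain ⟨_ | c, hc⟩ := j
    · rw [pathWeight_AB_zero]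
      simp
      omega
    · have := h.count_succ c
      have := h.count_succ (c + 1)
      rw [pathWeight_AB_succ]
      simp
      omega

lemma isMinuscule_AB (hn : 0 < n) : IsMinuscule (AB n) (Pi.single ⟨0, hn⟩ 1) where
  diag i := by simp [AB]
  nonpos i j hij := by
    simp only [AB, if_neg hij]
    split_ifs <;> simp
  zero_symm i j := by
    simp only [AB, Fin.ext_iff]
    grind
  dominant := (Pi.single_nonneg (α := fun _ => ℤ)).2 zero_le_one
  weight_mem w hw i := by
    have h := (isPath_AB_iff hn).1 hw
    rw [Set.mem_Icc]
    obtain ⟨_ | c, hc⟩ := i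
    · have := h.count_succ 0
      rw [zero_add] at this
      rw [pathWeight_AB_zero]
      omega
    · have := h.count_succ c
      have := h.count_succ (c + 1)
      rw [pathWeight_AB_succ]
      omega

lemma card_permPairs_isPath_AB (hn : 0 < n) :
    Nat.card (PermPairs (IsPath (AB n) (Pi.single ⟨0, hn⟩ 1)) m) = Nat.card (TabPairs n m) := by
  rw [← card_permPairs_isResidueWord]
  refine card_permPairs_eq_of_bijOn (π := Fin.val)
    ⟨fun w => (isPath_AB_iff hn).1, (List.map_injective_iff.2 Fin.val_injective).injOn,
      fun v hv => ?_⟩ fun u v _ _ => (List.map_perm_map_iff Fin.val_injective).1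
  obtain ⟨w, rfl⟩ : v ∈ Set.range (List.map (Fin.val : Fin n → ℕ)) := by
    rw [Set.range_list_map]
    exact fun x hx => ⟨⟨x, hv.lt_of_mem x hx⟩, rfl⟩
  exact ⟨w, (isPath_AB_iff hn).2 hv, rfl⟩

lemma pathWeight_AB_zero_eq (hn : 0 < n) {v : List (Fin n)}
    (hv : IsPath (AB n) (Pi.single ⟨0, hn⟩ 1) v) :
    pathWeight (AB n) (Pi.single ⟨0, hn⟩ 1) v ⟨0, hn⟩ = 1 ∨
      pathWeight (AB n) (Pi.single ⟨0, hn⟩ 1) v ⟨0, hn⟩ = -1 := by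
  have hmem := (isMinuscule_AB hn).weight_mem v hv ⟨0, hn⟩
  rw [pathWeight_AB_zero, Set.mem_Icc] at hmem
  rw [pathWeight_AB_zero]
  omega

/-- The folding of the diagram `D_{n+1}` onto `B_n`, which identifies the two end nodes. -/
def fold (hn : 0 < n) (j : Fin (n + 1)) : Fin n := ⟨j - 1, by omega⟩

lemma fold_of_lt_two (hn : 0 < n) {j : Fin (n + 1)} (hj : (j : ℕ) < 2) : fold hn j = ⟨0, hn⟩ := by
  simp only [fold, Fin.ext_iff]
  omega

lemma fold_eq_fold_iff (hn : 0 < n) {i j : Fin (n + 1)} (hi : 2 ≤ (i : ℕ)) :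
    fold hn j = fold hn i ↔ j = i := by
  simp only [fold, Fin.ext_iff]
  omega

lemma count_map_fold (hn : 0 < n) (w : List (Fin (n + 1))) {i : Fin (n + 1)} (hi : 2 ≤ (i : ℕ)) :
    (w.map (fold hn)).count (fold hn i) = w.count i := by
  induction w with
  | nil => rfl
  | cons j w ih =>
    simp only [List.map_cons, List.count_cons, ih, beq_iff_eq, fold_eq_fold_iff hn hi]

lemma count_map_fold_zero (hn : 0 < n) (w : List (Fin (n + 1))) :
    (w.map (fold hn)).count ⟨0, hn⟩ = w.count ⟨0, by omega⟩ + w.count ⟨1, by omega⟩ := by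
  induction w with
  | nil => rfl
  | cons j w ih =>
    simp only [List.map_cons, List.count_cons, ih, beq_iff_eq, fold, Fin.ext_iff]
    grind

lemma AD_eq_AB_fold (hn : 0 < n) {i : Fin (n + 1)} (hi : 2 ≤ (i : ℕ)) (j : Fin (n + 1)) :
    AD (n + 1) i j = AB n (fold hn i) (fold hn j) := by
  simp only [AD, AB, fold, Fin.ext_iff]
  grind

lemma AD_zero_add_AD_one (hn : 0 < n) (j : Fin (n + 1)) :
    AD (n + 1) ⟨0, by omega⟩ j + AD (n + 1) ⟨1, by omega⟩ j = AB n ⟨0, hn⟩ (fold hn j) := by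
  simp only [AD, AB, fold, Fin.ext_iff]
  grind

lemma AD_zero_sub_AD_one (hn : 0 < n) (j : Fin (n + 1)) :
    AD (n + 1) ⟨0, by omega⟩ j - AD (n + 1) ⟨1, by omega⟩ j =
      if (j : ℕ) = 0 then 2 else if (j : ℕ) = 1 then -2 else 0 := by
  simp only [AD, Fin.ext_iff]
  grind

lemma eq_zero_or_eq_one_or_two_le (hn : 0 < n) (i : Fin (n + 1)) :
    i = ⟨0, by omega⟩ ∨ i = ⟨1, by omega⟩ ∨ 2 ≤ (i : ℕ) := by
  simp only [Fin.ext_iff]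
  omega

/-- The half-spin weights of type `D_{n+1}`: the fundamental weights of the two end nodes. -/
def IsHalfSpin (Λ : Fin (n + 1) → ℤ) : Prop := ∃ a : Fin (n + 1), (a : ℕ) < 2 ∧ Λ = Pi.single a 1

namespace IsHalfSpin

variable {Λ : Fin (n + 1) → ℤ} (hΛ : IsHalfSpin Λ)
include hΛ

lemma pathWeight_fold (hn : 0 < n) (w : List (Fin (n + 1))) {i : Fin (n + 1)} (hi : 2 ≤ (i : ℕ)) :
    pathWeight (AD (n + 1)) Λ w i =
      pathWeight (AB n) (Pi.single ⟨0, hn⟩ 1) (w.map (fold hn)) (fold hn i) := by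
  induction w with
  | nil =>
    obtain ⟨a, ha, rfl⟩ := hΛ
    rw [List.map_nil, pathWeight_nil, pathWeight_nil, Pi.single_eq_of_ne, Pi.single_eq_of_ne] <;>
      simp only [fold, ne_eq, Fin.ext_iff] <;> omega
  | cons j w ih =>
    rw [List.map_cons, pathWeight_cons_apply, pathWeight_cons_apply, ih, AD_eq_AB_fold hn hi]

lemma pathWeight_zero_add_one (hn : 0 < n) (w : List (Fin (n + 1))) :
    pathWeight (AD (n + 1)) Λ w ⟨0, by omega⟩ + pathWeight (AD (n + 1)) Λ w ⟨1, by omega⟩ =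
      pathWeight (AB n) (Pi.single ⟨0, hn⟩ 1) (w.map (fold hn)) ⟨0, hn⟩ := by
  induction w with
  | nil =>
    obtain ⟨a, ha, rfl⟩ := hΛ
    simp only [List.map_nil, pathWeight_nil, Pi.single_apply, Fin.ext_iff]
    grind
  | cons j w ih =>
    rw [List.map_cons, pathWeight_cons_apply, pathWeight_cons_apply, pathWeight_cons_apply, ← ih,
      ← AD_zero_add_AD_one hn]
    ring

end IsHalfSpin

lemma pathWeight_AD_zero_sub_one (hn : 0 < n) (Λ : Fin (n + 1) → ℤ) (w : List (Fin (n + 1))) :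
    pathWeight (AD (n + 1)) Λ w ⟨0, by omega⟩ - pathWeight (AD (n + 1)) Λ w ⟨1, by omega⟩ =
      Λ ⟨0, by omega⟩ - Λ ⟨1, by omega⟩ - 2 * w.count ⟨0, by omega⟩ +
        2 * w.count ⟨1, by omega⟩ := by
  induction w with
  | nil => simp [pathWeight_nil]
  | cons j w ih =>
    have hj := AD_zero_sub_AD_one hn j
    simp only [pathWeight_cons_apply, List.count_cons, beq_iff_eq, Fin.ext_iff]
    grind

namespace IsHalfSpin

variable {Λ : Fin (n + 1) → ℤ} (hΛ : IsHalfSpin Λ)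
include hΛ

lemma zero_sub_one (hn : 0 < n) :
    Λ ⟨0, by omega⟩ - Λ ⟨1, by omega⟩ = 1 ∨ Λ ⟨0, by omega⟩ - Λ ⟨1, by omega⟩ = -1 := by
  obtain ⟨a, ha, rfl⟩ := hΛ
  simp only [Pi.single_apply, Fin.ext_iff]
  grind

lemma isPath_map_fold_and_pathWeight_sub (hn : 0 < n) {w : List (Fin (n + 1))}
    (hw : IsPath (AD (n + 1)) Λ w) :
    IsPath (AB n) (Pi.single ⟨0, hn⟩ 1) (w.map (fold hn)) ∧
      (pathWeight (AD (n + 1)) Λ w ⟨0, by omega⟩ - pathWeight (AD (n + 1)) Λ w ⟨1, by omega⟩ = 1 ∨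
      pathWeight (AD (n + 1)) Λ w ⟨0, by omega⟩ - pathWeight (AD (n + 1)) Λ w ⟨1, by omega⟩ =
        -1) := by
  induction w with
  | nil => exact ⟨isPath_nil, by simpa only [pathWeight_nil] using hΛ.zero_sub_one hn⟩
  | cons j w ih =>
    obtain ⟨hw, hj⟩ := isPath_cons.1 hw
    obtain ⟨hfold, hdiff⟩ := ih hw
    have hsum := pathWeight_AB_zero_eq hn hfold
    rw [← hΛ.pathWeight_zero_add_one hn] at hsum
    have hstep := AD_zero_sub_AD_one hn j
    rw [List.map_cons, isPath_cons, pathWeight_cons_apply, pathWeight_cons_apply]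
    have hadd := hΛ.pathWeight_zero_add_one hn w
    obtain rfl | rfl | hj2 := eq_zero_or_eq_one_or_two_le hn j
    · rw [fold_of_lt_two hn zero_lt_two, ← hadd]
      exact ⟨⟨hfold, by omega⟩, by grind⟩
    · rw [fold_of_lt_two hn one_lt_two, ← hadd]
      exact ⟨⟨hfold, by omega⟩, by grind⟩
    · rw [if_neg (by omega), if_neg (by omega)] at hstep
      rw [← hΛ.pathWeight_fold hn w hj2]
      exact ⟨⟨hfold, hj⟩, by omega⟩

lemma isMinuscule (hn : 0 < n) : IsMinuscule (AD (n + 1)) Λ where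
  diag i := by simp [AD]
  nonpos i j hij := by
    simp only [AD, if_neg hij]
    split_ifs <;> simp
  zero_symm i j := by
    simp only [AD, Fin.ext_iff]
    grind
  dominant := by
    obtain ⟨a, -, rfl⟩ := hΛ
    exact (Pi.single_nonneg (α := fun _ => ℤ)).2 zero_le_one
  weight_mem w hw i := by
    obtain ⟨hfold, hdiff⟩ := hΛ.isPath_map_fold_and_pathWeight_sub hn hw
    have hsum := pathWeight_AB_zero_eq hn hfold
    rw [← hΛ.pathWeight_zero_add_one hn] at hsum
    obtain rfl | rfl | hi := eq_zero_or_eq_one_or_two_le hn i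
    · rw [Set.mem_Icc]
      omega
    · rw [Set.mem_Icc]
      omega
    · rw [hΛ.pathWeight_fold hn w hi]
      exact (isMinuscule_AB hn).weight_mem _ hfold _

lemma bijOn_fold (hn : 0 < n) {w : List (Fin (n + 1))} (hw : IsPath (AD (n + 1)) Λ w) :
    Set.BijOn (fold hn) {i | IsPath (AD (n + 1)) Λ (i :: w)}
      {c | IsPath (AB n) (Pi.single ⟨0, hn⟩ 1) (c :: w.map (fold hn))} := by
  obtain ⟨hfold, hdiff⟩ := hΛ.isPath_map_fold_and_pathWeight_sub hn hw
  have hadd := hΛ.pathWeight_zero_add_one hn w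
  have hsum := pathWeight_AB_zero_eq hn hfold
  refine ⟨fun i hi => (hΛ.isPath_map_fold_and_pathWeight_sub hn hi).1, fun i hi j hj hij => ?_, ?_⟩
  · have hi' := (isPath_cons.1 hi).2
    have hj' := (isPath_cons.1 hj).2
    rw [← hadd] at hsum
    obtain rfl | rfl | hi2 := eq_zero_or_eq_one_or_two_le hn i <;>
      obtain rfl | rfl | hj2 := eq_zero_or_eq_one_or_two_le hn j <;>
      simp only [fold, Fin.ext_iff] at hij ⊢ <;> omega
  · rintro ⟨_ | c, hc⟩ h
    · rw [Set.mem_ofPred, isPath_cons, ← hadd] at h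
      obtain h0 | h1 : pathWeight (AD (n + 1)) Λ w ⟨0, by omega⟩ = 1 ∨
          pathWeight (AD (n + 1)) Λ w ⟨1, by omega⟩ = 1 := by omega
      · exact ⟨_, isPath_cons.2 ⟨hw, h0⟩, rfl⟩
      · exact ⟨_, isPath_cons.2 ⟨hw, h1⟩, rfl⟩
    · refine ⟨⟨c + 2, by omega⟩, isPath_cons.2 ⟨hw, ?_⟩, rfl⟩
      rw [hΛ.pathWeight_fold hn w (by simp)]
      exact (isPath_cons.1 h).2

lemma perm_of_perm_map_fold (hn : 0 < n) {u v : List (Fin (n + 1))}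
    (hu : IsPath (AD (n + 1)) Λ u) (hv : IsPath (AD (n + 1)) Λ v)
    (h : (u.map (fold hn)).Perm (v.map (fold hn))) : u.Perm v := by
  have hsub {w : List (Fin (n + 1))} (hw : IsPath (AD (n + 1)) Λ w) :=
    pathWeight_AD_zero_sub_one hn Λ w ▸ (hΛ.isPath_map_fold_and_pathWeight_sub hn hw).2
  have hu := hsub hu
  have hv := hsub hv
  have hΛ01 := hΛ.zero_sub_one hn
  have hends := h.count_eq ⟨0, hn⟩
  rw [count_map_fold_zero, count_map_fold_zero] at hends
  refine List.perm_iff_count.2 fun i => ?_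
  obtain rfl | rfl | hi := eq_zero_or_eq_one_or_two_le hn i
  · omega
  · omega
  · rw [← count_map_fold hn u hi, ← count_map_fold hn v hi, h.count_eq]

theorem card_permPairs (hn : 0 < n) :
    Nat.card (PermPairs (IsPath (AD (n + 1)) Λ) m) = Nat.card (TabPairs n m) := by
  rw [← card_permPairs_isPath_AB hn]
  exact card_permPairs_eq_of_bijOn
    (bijOn_map_of_cons isPath_nil isPath_nil (fun i w h => (isPath_cons.1 h).1)
      (fun c v h => (isPath_cons.1 h).1) fun w hw => hΛ.bijOn_fold hn hw)
    fun u v hu hv => hΛ.perm_of_perm_map_fold hn hu hv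

end IsHalfSpin

end Spin

theorem cyclotomic_QHA_dim_B_D
    (k : Type) [Field k] (n : ℕ) (hn : 2 ≤ n) (m : ℕ)
    (QB : Fin n → Fin n → MvPolynomial (Fin 2) k)
    (hQB : QAdmissible k (AB n) (dB n) QB)
    (QD : Fin (n + 1) → Fin (n + 1) → MvPolynomial (Fin 2) k)
    (hQD : QAdmissible k (AD (n + 1)) (fun _ => 1) QD) :
    Module.finrank k (RingQuot (CRel k QB (Set.univ : Set (Fin m → Fin n))
        (Pi.single ⟨0, by omega⟩ 1))) = Nat.card (TabPairs n m) ∧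
    Module.finrank k (RingQuot (CRel k QD (Set.univ : Set (Fin m → Fin (n + 1)))
        (Pi.single ⟨0, by omega⟩ 1))) = Nat.card (TabPairs n m) ∧
    Module.finrank k (RingQuot (CRel k QD (Set.univ : Set (Fin m → Fin (n + 1)))
        (Pi.single ⟨1, by omega⟩ 1))) = Nat.card (TabPairs n m) := by
  have hpos : 0 < n := by omega
  have hspin₀ : IsHalfSpin (Pi.single ⟨0, by omega⟩ 1 : Fin (n + 1) → ℤ) := ⟨_, zero_lt_two, rfl⟩
  have hspin₁ : IsHalfSpin (Pi.single ⟨1, by omega⟩ 1 : Fin (n + 1) → ℤ) := ⟨_, one_lt_two, rfl⟩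
  have hdB (i : Fin n) : dB n i ≠ 0 := by
    unfold dB
    split_ifs <;> simp
  refine ⟨?_, ?_, ?_⟩
  · rw [CyclotomicQHA.finrank_eq_card_permPairs (isMinuscule_AB hpos) hQB hdB,
      card_permPairs_isPath_AB hpos]
  · rw [CyclotomicQHA.finrank_eq_card_permPairs (hspin₀.isMinuscule hpos) hQD fun _ => one_ne_zero,
      hspin₀.card_permPairs hpos]
  · rw [CyclotomicQHA.finrank_eq_card_permPairs (hspin₁.isMinuscule hpos) hQD fun _ => one_ne_zero,
      hspin₁.card_permPairs hpos]

end QHA
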